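/- There exists a connected graph G of bounded degree such that: (1) G is Gromov-hyperbolic; (2) G is transient; (3) every vertex of G lies on a bi-infinite geodesic of G; and (4) every bounded harmonic function on G is constant. (This disproves the graph case of the conjecture of Benjamini and Schramm that a Gromov-hyperbolic, bounded-degree, transient graph with C-dense bi-infinite geodesics admits non-constant bounded harmonic functions.) -/

import Mathlib

/-!
The graph `HG` is a horoball over `ℕ × ⊕ (ℤ/2)⁶` with a ray attached at every vertex. Horoball
vertices are triples `(n, k, w)`: at level `n`, a block of `2 ^ n` consecutive integers numbered `k`
and a coset `w` of the `n`-th finite subgroup, of order `64 ^ n`. The parent of `(n, k, w)` is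
`(n + 1, k / 2, w / 64)`, and horizontal edges join `(n, k, w)` to `(n, k + 1, w)`; the coordinate
`w` can be changed only by going up and down again.

*Geodesics.* The level (decreasing along the attached rays) is 1-Lipschitz, so any line that goes
down an attached ray and up the parents is a geodesic (`vline_geodesic`).

*Hyperbolicity.* Up to an additive constant, `d(u, v) = 2 join(u, v) - lev u - lev v`
(`dist_join`), where `join` is the first level at which the blocks of `u` and `v` agree in `w` and
are close in `k`. The upper bound is the path through the join; the lower bound is the invariant
`Far`, propagated along walks. Since `join` satisfies the ultrametric inequality up to a constant
(`join_ultra`), the Gromov product does too.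

*Liouville property.* A bounded harmonic function `h` is linear, hence constant, on each attached
ray. A translation of the `w` coordinate is an automorphism fixing everything at high levels, so the
difference of `h` and its translate is bounded, harmonic, and zero from some level `N` on; from
every vertex the walk climbs straight to level `N` with probability bounded below, so this
difference vanishes (`Balanced.block_invariant`). Thus `h` descends to the quotient by the
translations, a network on the pairs `(n, k)` in which level `n` carries the weight `64 ^ (-n)`.
The cutoffs `cut N` exhaust this network and their energies tend to `0` (it is recurrent), so the
Caccioppoli inequality (`QuotBalanced.energy`) shows that `h` has zero energy.

*Transience.* A unit of mass moves to the right along level `0`, and is spread from the first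
`64 ^ n` blocks to the first `64 ^ (n + 1)` blocks in `8 ^ n` equal portions, taken at the multiples
of `2 ^ (n + 1)`, each of which climbs to level `n + 1` and comes down again (`flow_level_zero`,
`flow_level_succ`). The `n`-th stage has length `2 * 16 ^ n` and is spread over `64 ^ n` blocks, so
its energy is at most of order `(16 / 64) ^ n`, and similarly for the vertical part; the stages
are added up by `summable_layers`.
-/

/-!
STATEMENT 2: There exists a connected graph G of bounded degree such that:
(1) G is Gromov-hyperbolic; (2) G is transient; (3) every vertex of G lies on a
bi-infinite geodesic of G; and (4) every bounded harmonic function on G is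
constant.  (Counterexample to the Benjamini–Schramm conjecture, graph case.)
-/

namespace Paper

variable {V : Type*}

/-- A flow on a graph: antisymmetric and supported on edges. -/
def IsFlow (G : SimpleGraph V) (θ : V → V → ℝ) : Prop :=
  (∀ u v, θ u v = -θ v u) ∧ ∀ u v, θ u v ≠ 0 → G.Adj u v

/-- The net outflow (divergence) of `θ` at a vertex. -/
noncomputable def divg (θ : V → V → ℝ) (v : V) : ℝ := ∑' w, θ v w

/-- Transience via Lyons' criterion: there is a unit flow from some vertex to
infinity of finite energy. -/
def Transient (G : SimpleGraph V) : Prop :=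
  ∃ (o : V) (θ : V → V → ℝ), IsFlow G θ ∧ divg θ o = 1 ∧
    (∀ v, v ≠ o → divg θ v = 0) ∧
    Summable (fun p : V × V => θ p.1 p.2 ^ 2)

/-- All vertex degrees are bounded by some fixed `D`. -/
def BoundedDegree (G : SimpleGraph V) : Prop :=
  ∃ D : ℕ, ∀ v, (G.neighborSet v).Finite ∧ (G.neighborSet v).ncard ≤ D

/-- The Gromov product `(x|y)_w` with respect to the graph distance. -/
noncomputable def GromovProduct (G : SimpleGraph V) (w x y : V) : ℝ :=
  ((G.dist x w : ℝ) + (G.dist y w : ℝ) - (G.dist x y : ℝ)) / 2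

/-- Gromov-hyperbolicity of the vertex set with the graph metric. -/
def GromovHyperbolic (G : SimpleGraph V) : Prop :=
  ∃ δ : ℝ, 0 ≤ δ ∧ ∀ w x y z : V,
    min (GromovProduct G w x z) (GromovProduct G w y z) - δ ≤ GromovProduct G w x y

/-- `h` is harmonic: at each vertex, `deg v · h v` equals the sum of `h` over
the neighbours of `v`. -/
def Harmonic (G : SimpleGraph V) (h : V → ℝ) : Prop :=
  ∀ v, ((G.neighborSet v).ncard : ℝ) * h v = ∑ᶠ w ∈ G.neighborSet v, h w

/-- A bi-infinite geodesic: `d(x m, x n) = |m − n|` for all `m, n ∈ ℤ`. -/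
def IsBiInfiniteGeodesic (G : SimpleGraph V) (x : ℤ → V) : Prop :=
  ∀ m n : ℤ, G.dist (x m) (x n) = (m - n).natAbs

/-! ### The graph -/

/-- A vertex `⟨n, k, w, t⟩`: horoball level `n`, dyadic block number `k`, base-64 block number `w`,
and depth `t` on the ray attached to the horoball vertex `⟨n, k, w, 0⟩`. -/
@[ext] structure Vtx where
  n : ℕ
  k : ℕ
  w : ℕ
  t : ℕ

/-- The oriented edges of the graph: to the next block on the same level, to the parent block one
level up, and one step down the attached ray. -/
inductive Arc : Vtx → Vtx → Prop
  | right (n k w : ℕ) : Arc ⟨n, k, w, 0⟩ ⟨n, k + 1, w, 0⟩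
  | par (n k w : ℕ) : Arc ⟨n, k, w, 0⟩ ⟨n + 1, k / 2, w / 64, 0⟩
  | ray (n k w t : ℕ) : Arc ⟨n, k, w, t⟩ ⟨n, k, w, t + 1⟩

/-- The horoball over `ℕ × ⊕ (ℤ/2)⁶` with a ray attached at every vertex. -/
def HG : SimpleGraph Vtx where
  Adj u v := Arc u v ∨ Arc v u
  symm := ⟨fun _ _ h => h.symm⟩
  loopless := ⟨by
    intro v h
    have key : ∀ u v, Arc u v → u ≠ v := by
      intro u v h
      cases h <;> simp
    rcases h with h | h <;> exact key _ _ h rfl⟩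

/-! ### Connectedness and vertical geodesics -/

lemma reachable_up (n k w i : ℕ) :
    HG.Reachable ⟨n, k, w, 0⟩ ⟨n + i, k / 2 ^ i, w / 64 ^ i, 0⟩ := by
  induction i with
  | zero => simp
  | succ i ih =>
    refine ih.trans (SimpleGraph.Adj.reachable (Or.inl ?_))
    have := Arc.par (n + i) (k / 2 ^ i) (w / 64 ^ i)
    rwa [Nat.div_div_eq_div_mul, Nat.div_div_eq_div_mul, ← pow_succ, ← pow_succ] at this

lemma reachable_ray (n k w t : ℕ) : HG.Reachable ⟨n, k, w, t⟩ ⟨n, k, w, 0⟩ := by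
  induction t with
  | zero => rfl
  | succ t ih => exact (SimpleGraph.Adj.reachable (Or.inr (Arc.ray n k w t))).trans ih

lemma HG_connected : HG.Connected := by
  have hub : ∀ v : Vtx, ∃ m, ∀ i, m ≤ i → HG.Reachable v ⟨i, 0, 0, 0⟩ := by
    rintro ⟨n, k, w, t⟩
    refine ⟨n + (k + w), fun i hi => (reachable_ray n k w t).trans ?_⟩
    have h := reachable_up n k w (i - n)
    have hk : k < 2 ^ (i - n) :=
      Nat.lt_two_pow_self.trans_le (Nat.pow_le_pow_right (by norm_num) (by omega))
    have hw : w < 64 ^ (i - n) :=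
      (Nat.lt_pow_self (by norm_num)).trans_le
        (Nat.pow_le_pow_right (by norm_num : 0 < 64) (by omega : w ≤ i - n))
    rwa [Nat.div_eq_of_lt hk, Nat.div_eq_of_lt hw, Nat.add_sub_cancel' (by omega)] at h
  have : Nonempty Vtx := ⟨⟨0, 0, 0, 0⟩⟩
  refine SimpleGraph.Connected.mk fun u v => ?_
  obtain ⟨a, ha⟩ := hub u
  obtain ⟨b, hb⟩ := hub v
  exact (ha (max a b) (le_max_left _ _)).trans (hb (max a b) (le_max_right _ _)).symm

/-- The level of a vertex, a Busemann function of the graph; it decreases along attached rays. -/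
def Vtx.lev (v : Vtx) : ℤ := (v.n : ℤ) - v.t

lemma lev_adj {u v : Vtx} (h : HG.Adj u v) : v.lev ≤ u.lev + 1 ∧ u.lev ≤ v.lev + 1 := by
  rcases h with h | h <;> cases h <;> simp [Vtx.lev] <;> omega

lemma lev_walk {u v : Vtx} (p : HG.Walk u v) :
    v.lev ≤ u.lev + p.length ∧ u.lev ≤ v.lev + p.length := by
  induction p with
  | nil => simp
  | cons h p ih =>
    have := lev_adj h
    simp only [SimpleGraph.Walk.length_cons]
    push_cast
    omega

lemma lev_dist (u v : Vtx) : (u.lev - v.lev).natAbs ≤ HG.dist u v := by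
  obtain ⟨p, hp⟩ := HG_connected.exists_walk_length_eq_dist u v
  have := lev_walk p
  omega

lemma dist_succ {u v v' : Vtx} (h : HG.Adj v v') : HG.dist u v' ≤ HG.dist u v + 1 := by
  have h1 : HG.dist v v' = 1 := SimpleGraph.dist_eq_one_iff_adj.2 h
  have := HG_connected.dist_triangle (u := u) (v := v) (w := v')
  omega

/-- The vertical line through `v`: up along ancestors, down along the ray attached at `v`. -/
def vline (v : Vtx) (i : ℤ) : Vtx :=
  if 0 ≤ i then ⟨v.n + i.toNat, v.k / 2 ^ i.toNat, v.w / 64 ^ i.toNat, 0⟩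
  else ⟨v.n, v.k, v.w, (-i).toNat⟩

lemma vline_adj (v : Vtx) (i : ℤ) : HG.Adj (vline v i) (vline v (i + 1)) := by
  rcases lt_trichotomy i (-1) with hi | hi | hi
  · have h1 : ¬ 0 ≤ i := by omega
    have h2 : ¬ 0 ≤ i + 1 := by omega
    obtain ⟨t, ht⟩ : ∃ t : ℕ, (-(i + 1)).toNat = t := ⟨_, rfl⟩
    have ht' : (-i).toNat = t + 1 := by omega
    simp only [vline, h1, h2, if_false, ht, ht']
    exact Or.inr (Arc.ray _ _ _ _)
  · subst hi
    have : HG.Adj ⟨v.n, v.k, v.w, 1⟩ ⟨v.n, v.k, v.w, 0⟩ := Or.inr (Arc.ray v.n v.k v.w 0)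
    simpa [vline] using this
  · have h1 : 0 ≤ i := by omega
    have h2 : 0 ≤ i + 1 := by omega
    have ht' : (i + 1).toNat = i.toNat + 1 := by omega
    simp only [vline, h1, h2, if_true, ht']
    have := Arc.par (v.n + i.toNat) (v.k / 2 ^ i.toNat) (v.w / 64 ^ i.toNat)
    rw [Nat.div_div_eq_div_mul, Nat.div_div_eq_div_mul, ← pow_succ, ← pow_succ] at this
    exact Or.inl this

lemma vline_lev (v : Vtx) (i : ℤ) : (vline v i).lev = v.n + i := by
  unfold vline
  split_ifs with h <;> simp [Vtx.lev] <;> omega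

lemma vline_dist_le (v : Vtx) (i : ℤ) (j : ℕ) : HG.dist (vline v i) (vline v (i + j)) ≤ j := by
  induction j with
  | zero => simp
  | succ j ih =>
    have := dist_succ (u := vline v i) (vline_adj v (i + j))
    push_cast
    rw [← add_assoc]
    omega

lemma vline_geodesic (v : Vtx) : IsBiInfiniteGeodesic HG (vline v) := by
  intro m n
  apply le_antisymm
  · rcases le_total m n with h | h
    · have := vline_dist_le v m (n - m).toNat
      rw [show m + ((n - m).toNat : ℤ) = n by omega] at this
      omega
    · have := vline_dist_le v n (m - n).toNat
      rw [show n + ((m - n).toNat : ℤ) = m by omega, SimpleGraph.dist_comm] at this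
      omega
  · have := lev_dist (vline v m) (vline v n)
    simp only [vline_lev] at this
    omega

lemma exists_geodesic (v : Vtx) : ∃ x : ℤ → Vtx, IsBiInfiniteGeodesic HG x ∧ ∃ i : ℤ, x i = v := by
  refine ⟨vline ⟨v.n, v.k, v.w, 0⟩, vline_geodesic _, -v.t, ?_⟩
  rcases v with ⟨n, k, w, t⟩
  rcases t with _ | t
  · simp [vline]
  · have : ¬ (0 : ℤ) ≤ -((t + 1 : ℕ) : ℤ) := by omega
    simp only [vline, this, if_false]
    congr 1

/-! ### Neighbourhoods -/

open Classical in
/-- The children of the horoball vertex `⟨n + 1, k, w, 0⟩`. -/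
noncomputable def children (n k w : ℕ) : Finset Vtx :=
  (Finset.range 2 ×ˢ Finset.range 64).image fun p => ⟨n, 2 * k + p.1, 64 * w + p.2, 0⟩

lemma sum_children (φ : Vtx → ℝ) (n k w : ℕ) :
    ∑ u ∈ children n k w, φ u
      = ∑ r ∈ Finset.range 2, ∑ i ∈ Finset.range 64, φ ⟨n, 2 * k + r, 64 * w + i, 0⟩ := by
  classical
  unfold children
  rw [Finset.sum_image, Finset.sum_product]
  rintro ⟨a, b⟩ _ ⟨c, d⟩ _ h
  simp only [Vtx.mk.injEq, Prod.mk.injEq] at h ⊢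
  omega

lemma mem_children {n k w : ℕ} {u : Vtx} :
    u ∈ children n k w ↔ u.n = n ∧ u.k / 2 = k ∧ u.w / 64 = w ∧ u.t = 0 := by
  classical
  rcases u with ⟨a, b, c, d⟩
  simp only [children, Finset.mem_image, Finset.mem_product, Finset.mem_range, Prod.exists,
    Vtx.mk.injEq]
  constructor
  · rintro ⟨r, i, ⟨hr, hi⟩, h⟩
    omega
  · rintro ⟨h1, h2, h3, h4⟩
    exact ⟨b % 2, c % 64, by omega, by omega⟩

open Classical in
/-- The neighbours of a vertex, as a finset. -/
noncomputable def nbrs : Vtx → Finset Vtx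
  | ⟨n, k, w, t + 1⟩ => {⟨n, k, w, t⟩, ⟨n, k, w, t + 2⟩}
  | ⟨n, k, w, 0⟩ =>
    (({⟨n, k, w, 1⟩, ⟨n, k + 1, w, 0⟩, ⟨n + 1, k / 2, w / 64, 0⟩} : Finset Vtx) ∪
      (if 0 < k then {⟨n, k - 1, w, 0⟩} else ∅)) ∪
      (if 0 < n then children (n - 1) k w else ∅)

lemma mem_nbrs (u v : Vtx) : u ∈ nbrs v ↔ HG.Adj v u := by
  classical
  constructor
  · rcases v with ⟨n, k, w, _ | t⟩
    · simp only [nbrs, Finset.mem_union, Finset.mem_insert, Finset.mem_singleton]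
      rintro (((rfl | rfl | rfl) | h) | h)
      · exact Or.inl (Arc.ray _ _ _ _)
      · exact Or.inl (Arc.right _ _ _)
      · exact Or.inl (Arc.par _ _ _)
      · split_ifs at h with hk
        · rw [Finset.mem_singleton] at h
          subst h
          obtain ⟨k, rfl⟩ : ∃ j, k = j + 1 := ⟨k - 1, by omega⟩
          exact Or.inr (Arc.right _ _ _)
        · simp at h
      · split_ifs at h with hn
        · rcases u with ⟨a, b, c, d⟩
          obtain ⟨h1, h2, h3, h4⟩ := mem_children.1 h
          simp only at h1 h2 h3 h4
          obtain ⟨n, rfl⟩ : ∃ j, n = j + 1 := ⟨n - 1, by omega⟩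
          subst h1 h2 h3 h4
          exact Or.inr (Arc.par _ _ _)
        · simp at h
    · simp only [nbrs, Finset.mem_insert, Finset.mem_singleton]
      rintro (rfl | rfl)
      · exact Or.inr (Arc.ray _ _ _ _)
      · exact Or.inl (Arc.ray _ _ _ _)
  · rintro (h | h)
    · cases h with
      | right n k w => simp [nbrs]
      | par n k w => simp [nbrs]
      | ray n k w t => cases t <;> simp [nbrs]
    · cases h with
      | right n k w => simp [nbrs]
      | par n k w => simp [nbrs, mem_children]
      | ray n k w t => simp [nbrs]

lemma sum_nbrs_ray (φ : Vtx → ℝ) (n k w t : ℕ) :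
    ∑ u ∈ nbrs ⟨n, k, w, t + 1⟩, φ u = φ ⟨n, k, w, t⟩ + φ ⟨n, k, w, t + 2⟩ := by
  classical
  simp only [nbrs]
  rw [Finset.sum_pair (by simp)]

lemma sum_nbrs_base (φ : Vtx → ℝ) (n k w : ℕ) :
    ∑ u ∈ nbrs ⟨n, k, w, 0⟩, φ u
      = φ ⟨n, k, w, 1⟩ + φ ⟨n, k + 1, w, 0⟩ + φ ⟨n + 1, k / 2, w / 64, 0⟩
        + (if 0 < k then φ ⟨n, k - 1, w, 0⟩ else 0)
        + (if 0 < n then ∑ r ∈ Finset.range 2, ∑ i ∈ Finset.range 64,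
            φ ⟨n - 1, 2 * k + r, 64 * w + i, 0⟩ else 0) := by
  classical
  simp only [nbrs]
  rw [Finset.sum_union, Finset.sum_union, Finset.sum_insert, Finset.sum_pair]
  · rw [← sum_children]
    congr 1
    · congr 1
      · ring
      · split_ifs <;> simp
    · split_ifs <;> simp
  · simp
  · simp
  · rw [Finset.disjoint_left]
    intro u hu
    simp only [Finset.mem_insert, Finset.mem_singleton] at hu
    split_ifs with hk
    · rw [Finset.mem_singleton]
      rcases hu with rfl | rfl | rfl <;> (simp; try omega)
    · simp
  · rw [Finset.disjoint_left]
    intro u hu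
    have hu' : n ≤ u.n := by
      simp only [Finset.mem_union, Finset.mem_insert, Finset.mem_singleton] at hu
      rcases hu with (rfl | rfl | rfl) | h
      · simp
      · simp
      · simp
      · split_ifs at h
        · rw [Finset.mem_singleton] at h
          simp [h]
        · simp at h
    split_ifs with hn
    · rw [mem_children]
      omega
    · simp

lemma neighborSet_eq (v : Vtx) : HG.neighborSet v = ↑(nbrs v) := by
  ext u
  simp [mem_nbrs]

lemma card_nbrs_le (v : Vtx) : (nbrs v).card ≤ 132 := by
  have h : ((nbrs v).card : ℝ) = ∑ u ∈ nbrs v, (1 : ℝ) := by simp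
  have h' : ((nbrs v).card : ℝ) ≤ 132 := by
    rw [h]
    rcases v with ⟨n, k, w, _ | t⟩
    · rw [sum_nbrs_base]
      split_ifs <;> norm_num
    · rw [sum_nbrs_ray]
      norm_num
  exact_mod_cast h'

lemma HG_boundedDegree : BoundedDegree HG := by
  refine ⟨132, fun v => ?_⟩
  rw [neighborSet_eq, Set.ncard_coe_finset]
  exact ⟨Finset.finite_toSet _, card_nbrs_le v⟩

/-! ### Gromov hyperbolicity -/

/-- The gap between the dyadic intervals `[k 2^m, (k+1) 2^m]` and `[l 2^n, (l+1) 2^n]`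
(at most one of the two truncated differences is nonzero). -/
def gap (m k n l : ℕ) : ℕ := (k * 2 ^ m - (l + 1) * 2 ^ n) + (l * 2 ^ n - (k + 1) * 2 ^ m)

/-- The base-64 blocks `w` (level `m`) and `z` (level `n`) have the same ancestor at level `j`. -/
def Agree (m w n z j : ℕ) : Prop := m ≤ j ∧ n ≤ j ∧ w / 64 ^ (j - m) = z / 64 ^ (j - n)

lemma gap_comm (m k n l : ℕ) : gap m k n l = gap n l m k := by
  unfold gap
  omega

lemma Agree.symm {m w n z j : ℕ} (h : Agree m w n z j) : Agree n z m w j :=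
  ⟨h.2.1, h.1, h.2.2.symm⟩

lemma Agree.trans {m w n z p y j : ℕ} (h : Agree m w n z j) (h' : Agree n z p y j) :
    Agree m w p y j :=
  ⟨h.1, h'.2.1, h.2.2.trans h'.2.2⟩

lemma Agree.mono {m w n z j j' : ℕ} (h : Agree m w n z j) (hj : j ≤ j') : Agree m w n z j' := by
  obtain ⟨h1, h2, h3⟩ := h
  refine ⟨by omega, by omega, ?_⟩
  have e1 : j' - m = (j - m) + (j' - j) := by omega
  have e2 : j' - n = (j - n) + (j' - j) := by omega
  rw [e1, e2, pow_add, pow_add, ← Nat.div_div_eq_div_mul, ← Nat.div_div_eq_div_mul, h3]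

lemma Agree.up {m w n z j : ℕ} (h : Agree m w n z j) (hj : m + 1 ≤ j) :
    Agree (m + 1) (w / 64) n z j := by
  obtain ⟨h1, h2, h3⟩ := h
  refine ⟨hj, h2, ?_⟩
  rw [← h3, Nat.div_div_eq_div_mul, ← pow_succ']
  congr 2
  omega

lemma Agree.down {m w n z j : ℕ} (h : Agree (m + 1) (w / 64) n z j) : Agree m w n z j := by
  obtain ⟨h1, h2, h3⟩ := h
  refine ⟨by omega, h2, ?_⟩
  rw [← h3, Nat.div_div_eq_div_mul, ← pow_succ']
  congr 2
  omega

lemma gap_right (m k n l : ℕ) : gap m (k + 1) n l ≤ gap m k n l + 2 ^ m := by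
  have hm := Nat.two_pow_pos m
  have hn := Nat.two_pow_pos n
  unfold gap
  simp only [add_mul, one_mul]
  omega

lemma gap_left (m k n l : ℕ) : gap m k n l ≤ gap m (k + 1) n l + 2 ^ m := by
  have hm := Nat.two_pow_pos m
  have hn := Nat.two_pow_pos n
  unfold gap
  simp only [add_mul, one_mul]
  omega

lemma half_mul (m k : ℕ) :
    k / 2 * 2 ^ (m + 1) = k * 2 ^ m ∨ k / 2 * 2 ^ (m + 1) + 2 ^ m = k * 2 ^ m := by
  rcases Nat.even_or_odd' k with ⟨c, rfl | rfl⟩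
  · left
    rw [Nat.mul_div_cancel_left _ (by norm_num), pow_succ]
    ring
  · right
    rw [show (2 * c + 1) / 2 = c by omega, pow_succ]
    ring

lemma gap_up (m k n l : ℕ) : gap (m + 1) (k / 2) n l ≤ gap m k n l := by
  have h := half_mul m k
  have h2 : 2 ^ (m + 1) = 2 * 2 ^ m := pow_succ' 2 m
  have hm := Nat.two_pow_pos m
  have hn := Nat.two_pow_pos n
  unfold gap
  simp only [add_mul, one_mul]
  omega

lemma gap_down (m k n l : ℕ) : gap m k n l ≤ gap (m + 1) (k / 2) n l + 2 ^ m := by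
  have h := half_mul m k
  have h2 : 2 ^ (m + 1) = 2 * 2 ^ m := pow_succ' 2 m
  have hm := Nat.two_pow_pos m
  have hn := Nat.two_pow_pos n
  unfold gap
  simp only [add_mul, one_mul]
  omega

lemma gap_triangle (m k n l p q : ℕ) :
    gap m k p q ≤ gap m k n l + 2 ^ n + gap n l p q := by
  have hm := Nat.two_pow_pos m
  have hn := Nat.two_pow_pos n
  have hp := Nat.two_pow_pos p
  unfold gap
  simp only [add_mul, one_mul]
  omega

lemma gap_iter (m k n l i : ℕ) : gap (m + i) (k / 2 ^ i) n l ≤ gap m k n l := by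
  induction i with
  | zero => simp
  | succ i ih =>
    have := gap_up (m + i) (k / 2 ^ i) n l
    rw [Nat.div_div_eq_div_mul, ← pow_succ] at this
    exact this.trans ih

/-- Lower bound for a length `L` of a walk from `u` to `v`, up to an additive constant:
`L ≥ 2 log₂ (gap + 2^j + 2^m + 2^n) - lev u - lev v`, written without logarithms. -/
def Far (L : ℕ) (u v : Vtx) : Prop :=
  ∃ j, Agree u.n u.w v.n v.w j ∧
    (gap u.n u.k v.n v.k + 2 * 2 ^ j + 2 ^ u.n + 2 ^ v.n) ^ 2 * 2 ^ (u.t + v.t)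
      ≤ 16 * 2 ^ (L + u.n + v.n)

/-- The alternative: `u` and `v` lie on the same attached ray. -/
def Near (L : ℕ) (u v : Vtx) : Prop :=
  u.n = v.n ∧ u.k = v.k ∧ u.w = v.w ∧ u.t ≤ v.t + L ∧ v.t ≤ u.t + L

lemma Near.far {L : ℕ} {u v : Vtx} (h : Near L u v) (ht : u.t = 0) : Far L u v := by
  obtain ⟨h1, h2, h3, -, h5⟩ := h
  refine ⟨u.n, ⟨le_rfl, h1.ge, by rw [← h1, ← h3]⟩, ?_⟩
  have hg : gap u.n u.k v.n v.k = 0 := by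
    have hpos := Nat.two_pow_pos u.n
    rw [← h1, ← h2]
    unfold gap
    simp only [add_mul, one_mul]
    omega
  rw [hg, ← h1, ht]
  have : 2 ^ (0 + v.t) ≤ 2 ^ L := Nat.pow_le_pow_right (by norm_num) (by omega)
  calc (0 + 2 * 2 ^ u.n + 2 ^ u.n + 2 ^ u.n) ^ 2 * 2 ^ (0 + v.t)
      ≤ (0 + 2 * 2 ^ u.n + 2 ^ u.n + 2 ^ u.n) ^ 2 * 2 ^ L := by gcongr
    _ = 16 * 2 ^ (L + u.n + u.n) := by rw [pow_add, pow_add]; ring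

lemma far_right {L : ℕ} {n k k' w : ℕ} {v : Vtx}
    (hk : gap n k' v.n v.k ≤ gap n k v.n v.k + 2 ^ n)
    (h : Far L ⟨n, k, w, 0⟩ v) : Far (L + 1) ⟨n, k', w, 0⟩ v := by
  obtain ⟨j, hj, h⟩ := h
  refine ⟨j, hj, ?_⟩
  simp only at h ⊢
  have hn : 2 ^ n ≤ 2 ^ j := Nat.pow_le_pow_right (by norm_num) hj.1
  have hv := Nat.two_pow_pos v.n
  set A := gap n k v.n v.k + 2 * 2 ^ j + 2 ^ n + 2 ^ v.n with hA
  have h3 : 3 * (gap n k' v.n v.k + 2 * 2 ^ j + 2 ^ n + 2 ^ v.n) ≤ 4 * A := by omega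
  set B := gap n k' v.n v.k + 2 * 2 ^ j + 2 ^ n + 2 ^ v.n
  have h4 : B ^ 2 ≤ 2 * A ^ 2 := by nlinarith
  calc B ^ 2 * 2 ^ (0 + v.t) ≤ 2 * A ^ 2 * 2 ^ (0 + v.t) := by gcongr
    _ = 2 * (A ^ 2 * 2 ^ (0 + v.t)) := by ring
    _ ≤ 2 * (16 * 2 ^ (L + n + v.n)) := by gcongr
    _ = 16 * 2 ^ (L + 1 + n + v.n) := by
      rw [show L + 1 + n + v.n = (L + n + v.n) + 1 by omega, pow_succ]; ring

lemma far_up {L : ℕ} {n k w : ℕ} {v : Vtx}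
    (h : Far L ⟨n, k, w, 0⟩ v) : Far (L + 1) ⟨n + 1, k / 2, w / 64, 0⟩ v := by
  obtain ⟨j, hj, h⟩ := h
  refine ⟨max j (n + 1), (hj.mono (le_max_left _ _)).up (le_max_right _ _), ?_⟩
  simp only at h ⊢
  have hnj : n ≤ j := hj.1
  have hn : 2 ^ max j (n + 1) ≤ 2 * 2 ^ j := by
    rw [← pow_succ']
    exact Nat.pow_le_pow_right (by norm_num) (by omega)
  have hg := gap_up n k v.n v.k
  have h2 : 2 ^ (n + 1) = 2 * 2 ^ n := pow_succ' 2 n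
  have hv := Nat.two_pow_pos v.n
  set A := gap n k v.n v.k + 2 * 2 ^ j + 2 ^ n + 2 ^ v.n with hA
  set B := gap (n + 1) (k / 2) v.n v.k + 2 * 2 ^ max j (n + 1) + 2 ^ (n + 1) + 2 ^ v.n
  have h3 : B ≤ 2 * A := by omega
  calc B ^ 2 * 2 ^ (0 + v.t) ≤ (2 * A) ^ 2 * 2 ^ (0 + v.t) := by gcongr
    _ = 4 * (A ^ 2 * 2 ^ (0 + v.t)) := by ring
    _ ≤ 4 * (16 * 2 ^ (L + n + v.n)) := by gcongr
    _ = 16 * 2 ^ (L + 1 + (n + 1) + v.n) := by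
      rw [show L + 1 + (n + 1) + v.n = (L + n + v.n) + 2 by omega, pow_add]; ring

lemma far_down {L : ℕ} {n k w : ℕ} {v : Vtx}
    (h : Far L ⟨n + 1, k / 2, w / 64, 0⟩ v) : Far (L + 1) ⟨n, k, w, 0⟩ v := by
  obtain ⟨j, hj, h⟩ := h
  refine ⟨j, hj.down, ?_⟩
  simp only at h ⊢
  have hg := gap_down n k v.n v.k
  have h2 : 2 ^ (n + 1) = 2 * 2 ^ n := pow_succ' 2 n
  set A := gap n k v.n v.k + 2 * 2 ^ j + 2 ^ n + 2 ^ v.n with hA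
  set B := gap (n + 1) (k / 2) v.n v.k + 2 * 2 ^ j + 2 ^ (n + 1) + 2 ^ v.n
  have h3 : A ≤ B := by omega
  calc A ^ 2 * 2 ^ (0 + v.t) ≤ B ^ 2 * 2 ^ (0 + v.t) := by gcongr
    _ ≤ 16 * 2 ^ (L + (n + 1) + v.n) := h
    _ = 16 * 2 ^ (L + 1 + n + v.n) := by
      rw [show L + 1 + n + v.n = L + (n + 1) + v.n by omega]

lemma far_ray {L : ℕ} {n k w t t' : ℕ} {v : Vtx} (ht : t' ≤ t + 1)
    (h : Far L ⟨n, k, w, t⟩ v) : Far (L + 1) ⟨n, k, w, t'⟩ v := by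
  obtain ⟨j, hj, h⟩ := h
  refine ⟨j, hj, ?_⟩
  simp only at h ⊢
  have h1 : 2 ^ (t' + v.t) ≤ 2 ^ (t + v.t + 1) := Nat.pow_le_pow_right (by norm_num) (by omega)
  set A := gap n k v.n v.k + 2 * 2 ^ j + 2 ^ n + 2 ^ v.n with hA
  calc A ^ 2 * 2 ^ (t' + v.t) ≤ A ^ 2 * 2 ^ (t + v.t + 1) := by gcongr
    _ = 2 * (A ^ 2 * 2 ^ (t + v.t)) := by ring
    _ ≤ 2 * (16 * 2 ^ (L + n + v.n)) := by gcongr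
    _ = 16 * 2 ^ (L + 1 + n + v.n) := by
      rw [show L + 1 + n + v.n = (L + n + v.n) + 1 by omega, pow_succ]; ring

lemma near_or_far_step {L : ℕ} {u u' v : Vtx} (h : Near L u v ∨ Far L u v) (ha : HG.Adj u' u) :
    Near (L + 1) u' v ∨ Far (L + 1) u' v := by
  have far0 : u.t = 0 → Far L u v := fun ht => h.elim (fun h => h.far ht) id
  rcases ha with ha | ha
  · cases ha with
    | right n k w => exact Or.inr (far_right (gap_left n k _ _) (far0 rfl))
    | par n k w => exact Or.inr (far_down (far0 rfl))
    | ray n k w t =>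
      refine h.imp (fun h => ?_) (far_ray (by omega))
      obtain ⟨h1, h2, h3, h4, h5⟩ := h
      simp only at h1 h2 h3 h4 h5
      exact ⟨h1, h2, h3, by simp only; omega, by simp only; omega⟩
  · cases ha with
    | right n k w => exact Or.inr (far_right (gap_right n k _ _) (far0 rfl))
    | par n k w => exact Or.inr (far_up (far0 rfl))
    | ray n k w t =>
      refine h.imp (fun h => ?_) (far_ray (by omega))
      obtain ⟨h1, h2, h3, h4, h5⟩ := h
      simp only at h1 h2 h3 h4 h5
      exact ⟨h1, h2, h3, by simp only; omega, by simp only; omega⟩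

lemma near_or_far_walk {u v : Vtx} (p : HG.Walk u v) :
    Near p.length u v ∨ Far p.length u v := by
  induction p with
  | nil => exact Or.inl ⟨rfl, rfl, rfl, by omega, by omega⟩
  | cons h p ih => exact near_or_far_step ih h

lemma near_or_far (u v : Vtx) : Near (HG.dist u v) u v ∨ Far (HG.dist u v) u v := by
  obtain ⟨p, hp⟩ := HG_connected.exists_walk_length_eq_dist u v
  rw [← hp]
  exact near_or_far_walk p

lemma Far.le {L : ℕ} {u v : Vtx} (h : Far L u v) : u.t + v.t ≤ L := by
  obtain ⟨j, hj, h⟩ := h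
  have h1 : 2 ^ u.n ≤ 2 ^ j := Nat.pow_le_pow_right (by norm_num) hj.1
  have h2 : 2 ^ v.n ≤ 2 ^ j := Nat.pow_le_pow_right (by norm_num) hj.2.1
  set A := gap u.n u.k v.n v.k + 2 * 2 ^ j + 2 ^ u.n + 2 ^ v.n
  have h3 : 2 * (2 ^ u.n + 2 ^ v.n) ≤ A := by omega
  have h4 : 16 * (2 ^ u.n * 2 ^ v.n) ≤ A ^ 2 := by
    calc 16 * (2 ^ u.n * 2 ^ v.n) = 4 * (4 * 2 ^ u.n * 2 ^ v.n) := by ring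
      _ ≤ 4 * (2 ^ u.n + 2 ^ v.n) ^ 2 := by
        gcongr
        exact four_mul_le_sq_add _ _
      _ = (2 * (2 ^ u.n + 2 ^ v.n)) ^ 2 := by ring
      _ ≤ A ^ 2 := by gcongr
  have h5 : 16 * (2 ^ u.n * 2 ^ v.n) * 2 ^ (u.t + v.t) ≤ 16 * (2 ^ u.n * 2 ^ v.n) * 2 ^ L := by
    calc 16 * (2 ^ u.n * 2 ^ v.n) * 2 ^ (u.t + v.t) ≤ A ^ 2 * 2 ^ (u.t + v.t) := by gcongr
      _ ≤ 16 * 2 ^ (L + u.n + v.n) := h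
      _ = 16 * (2 ^ u.n * 2 ^ v.n) * 2 ^ L := by rw [pow_add, pow_add]; ring
  have h6 := Nat.le_of_mul_le_mul_left h5 (by positivity)
  exact (Nat.pow_le_pow_iff_right (by norm_num)).1 h6

/-- At level `j` the ancestors of the two horoball vertices are at distance at most `2`. -/
def Meet (u v : Vtx) (j : ℕ) : Prop := Agree u.n u.w v.n v.w j ∧ gap u.n u.k v.n v.k ≤ 2 ^ j

lemma Meet.symm {u v : Vtx} {j : ℕ} (h : Meet u v j) : Meet v u j :=
  ⟨h.1.symm, by rw [gap_comm]; exact h.2⟩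

lemma Meet.mono {u v : Vtx} {j j' : ℕ} (h : Meet u v j) (hj : j ≤ j') : Meet u v j' :=
  ⟨h.1.mono hj, h.2.trans (Nat.pow_le_pow_right (by norm_num) hj)⟩

lemma Meet.trans {u v x : Vtx} {j : ℕ} (h : Meet u v j) (h' : Meet v x j) : Meet u x (j + 2) := by
  refine ⟨(h.1.trans h'.1).mono (by omega), ?_⟩
  have h1 := gap_triangle u.n u.k v.n v.k x.n x.k
  have h2 : 2 ^ v.n ≤ 2 ^ j := Nat.pow_le_pow_right (by norm_num) h'.1.1
  have h3 := h.2
  have h4 := h'.2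
  have h5 : 2 ^ (j + 2) = 4 * 2 ^ j := by rw [pow_add]; ring
  omega

lemma Far.meet {L : ℕ} {u v : Vtx} (h : Far L u v) :
    Meet u v ((L + u.n + v.n - u.t - v.t + 5) / 2) := by
  have hle := h.le
  obtain ⟨j, hj, h⟩ := h
  obtain ⟨T, hT⟩ : ∃ T, L + u.n + v.n = T + (u.t + v.t) := ⟨L + u.n + v.n - (u.t + v.t), by omega⟩
  rw [show L + u.n + v.n - u.t - v.t = T by omega]
  set A := gap u.n u.k v.n v.k + 2 * 2 ^ j + 2 ^ u.n + 2 ^ v.n with hA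
  rw [hT, pow_add 2 T, ← mul_assoc] at h
  have h1 := Nat.le_of_mul_le_mul_right h (by positivity)
  have h2 : A ≤ 2 ^ ((T + 5) / 2) := by
    refine (Nat.pow_le_pow_iff_left (n := 2) (by norm_num)).1 ?_
    calc A ^ 2 ≤ 16 * 2 ^ T := h1
      _ = 2 ^ (T + 4) := by rw [pow_add]; ring
      _ ≤ 2 ^ ((T + 5) / 2 * 2) := Nat.pow_le_pow_right (by norm_num) (by omega)
      _ = (2 ^ ((T + 5) / 2)) ^ 2 := by rw [pow_mul]
  have hu := Nat.two_pow_pos u.n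
  have hv := Nat.two_pow_pos v.n
  have hj2 := Nat.two_pow_pos j
  refine ⟨hj.mono ?_, by omega⟩
  exact (Nat.pow_le_pow_iff_right (by norm_num : 1 < 2)).1 (by omega)

lemma dist_up_le (n k w i : ℕ) :
    HG.dist ⟨n, k, w, 0⟩ ⟨n + i, k / 2 ^ i, w / 64 ^ i, 0⟩ ≤ i := by
  have := vline_dist_le ⟨n, k, w, 0⟩ 0 i
  simpa [vline] using this

lemma dist_ray_le (n k w t i : ℕ) : HG.dist ⟨n, k, w, t⟩ ⟨n, k, w, t + i⟩ ≤ i := by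
  induction i with
  | zero => simp
  | succ i ih =>
    have := dist_succ (u := ⟨n, k, w, t⟩) (Or.inl (Arc.ray n k w (t + i)) : HG.Adj _ _)
    rw [← add_assoc]
    omega

lemma dist_right_le (n k w i : ℕ) : HG.dist ⟨n, k, w, 0⟩ ⟨n, k + i, w, 0⟩ ≤ i := by
  induction i with
  | zero => simp
  | succ i ih =>
    have := dist_succ (u := ⟨n, k, w, 0⟩) (Or.inl (Arc.right n (k + i) w) : HG.Adj _ _)
    rw [← add_assoc]
    omega

lemma Meet.dist_le {u v : Vtx} {j : ℕ} (h : Meet u v j) :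
    HG.dist u v + u.n + v.n ≤ 2 * j + u.t + v.t + 2 := by
  rcases u with ⟨m, k, w, s⟩
  rcases v with ⟨n, l, z, t⟩
  obtain ⟨⟨h1, h2, h3⟩, h4⟩ := h
  simp only at h1 h2 h3 h4 ⊢
  obtain ⟨a, rfl⟩ : ∃ a, j = m + a := ⟨j - m, by omega⟩
  obtain ⟨b, hb⟩ : ∃ b, m + a = n + b := ⟨m + a - n, by omega⟩
  rw [show m + a - m = a by omega, show m + a - n = b by omega] at h3
  have d1 := dist_ray_le m k w 0 s
  have d2 := dist_ray_le n l z 0 t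
  have d3 := dist_up_le m k w a
  have d4 := dist_up_le n l z b
  rw [zero_add] at d1 d2
  have g1 := gap_iter m k n l a
  have g2 := gap_iter n l (m + a) (k / 2 ^ a) b
  rw [gap_comm] at g1
  rw [← hb] at g2 d4
  rw [← h3] at d4
  have d5 : HG.dist ⟨m + a, k / 2 ^ a, w / 64 ^ a, 0⟩ ⟨m + a, l / 2 ^ b, w / 64 ^ a, 0⟩ ≤ 2 := by
    have g3 : gap (m + a) (l / 2 ^ b) (m + a) (k / 2 ^ a) ≤ 2 ^ (m + a) := by omega
    set x := k / 2 ^ a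
    set y := l / 2 ^ b
    have hpos : 0 < 2 ^ (m + a) := by positivity
    have hx : x ≤ y + 2 := by
      by_contra hc
      have : (y + 3) * 2 ^ (m + a) ≤ x * 2 ^ (m + a) := Nat.mul_le_mul_right _ (by omega)
      unfold gap at g3
      simp only [add_mul, one_mul] at g3 this
      omega
    have hy : y ≤ x + 2 := by
      by_contra hc
      have : (x + 3) * 2 ^ (m + a) ≤ y * 2 ^ (m + a) := Nat.mul_le_mul_right _ (by omega)
      unfold gap at g3
      simp only [add_mul, one_mul] at g3 this
      omega
    rcases le_total x y with hxy | hxy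
    · have := dist_right_le (m + a) x (w / 64 ^ a) (y - x)
      rw [Nat.add_sub_cancel' hxy] at this
      omega
    · have := dist_right_le (m + a) y (w / 64 ^ a) (x - y)
      rw [Nat.add_sub_cancel' hxy, SimpleGraph.dist_comm] at this
      omega
  have t1 := HG_connected.dist_triangle (u := ⟨m, k, w, s⟩) (v := ⟨m, k, w, 0⟩) (w := ⟨n, l, z, t⟩)
  have t2 := HG_connected.dist_triangle (u := ⟨m, k, w, 0⟩)
    (v := ⟨m + a, k / 2 ^ a, w / 64 ^ a, 0⟩) (w := ⟨n, l, z, t⟩)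
  have t3 := HG_connected.dist_triangle (u := ⟨m + a, k / 2 ^ a, w / 64 ^ a, 0⟩)
    (v := ⟨m + a, l / 2 ^ b, w / 64 ^ a, 0⟩) (w := ⟨n, l, z, t⟩)
  have t4 := HG_connected.dist_triangle (u := ⟨m + a, l / 2 ^ b, w / 64 ^ a, 0⟩)
    (v := ⟨n, l, z, 0⟩) (w := ⟨n, l, z, t⟩)
  rw [SimpleGraph.dist_comm] at d1 d4
  omega

/-- `u` and `v` lie on the same attached ray. -/
def SameRay (u v : Vtx) : Prop := u.n = v.n ∧ u.k = v.k ∧ u.w = v.w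

lemma SameRay.meet {u v x : Vtx} {j : ℕ} (h : SameRay u v) : Meet u x j ↔ Meet v x j := by
  obtain ⟨h1, h2, h3⟩ := h
  unfold Meet
  rw [h1, h2, h3]

lemma SameRay.meet_right {u v x : Vtx} {j : ℕ} (h : SameRay u v) : Meet x u j ↔ Meet x v j := by
  obtain ⟨h1, h2, h3⟩ := h
  unfold Meet
  rw [h1, h2, h3]

lemma exists_meet (u v : Vtx) : ∃ j, Meet u v j := by
  have far0 : ∃ L, Far L ⟨u.n, u.k, u.w, 0⟩ v := by
    rcases near_or_far ⟨u.n, u.k, u.w, 0⟩ v with h | h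
    · exact ⟨_, h.far rfl⟩
    · exact ⟨_, h⟩
  obtain ⟨L, h⟩ := far0
  exact ⟨_, h.meet⟩

open Classical in
/-- The height of the join of `u` and `v`: up to a bounded error, the
level at which a geodesic between them turns. -/
noncomputable def join (u v : Vtx) : ℤ :=
  if SameRay u v then max u.lev v.lev else (Nat.find (exists_meet u v) : ℤ)

open Classical in
lemma dist_join (u v : Vtx) :
    2 * join u v - 5 ≤ HG.dist u v + u.lev + v.lev ∧
      HG.dist u v + u.lev + v.lev ≤ 2 * join u v + 2 := by
  unfold join
  split_ifs with h
  · have hd : HG.dist u v ≤ (u.t - v.t) + (v.t - u.t) := by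
      rcases u with ⟨m, k, w, s⟩
      rcases v with ⟨n, l, z, t⟩
      obtain ⟨rfl, rfl, rfl⟩ : m = n ∧ k = l ∧ w = z := h
      rcases le_total s t with hst | hst
      · have := dist_ray_le m k w s (t - s)
        rw [Nat.add_sub_cancel' hst] at this
        simp only
        omega
      · have := dist_ray_le m k w t (s - t)
        rw [Nat.add_sub_cancel' hst, SimpleGraph.dist_comm] at this
        simp only
        omega
    have hn := h.1
    have hl : u.t ≤ v.t + HG.dist u v ∧ v.t ≤ u.t + HG.dist u v := by
      rcases near_or_far u v with h | h
      · exact ⟨h.2.2.2.1, h.2.2.2.2⟩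
      · have := h.le
        omega
    unfold Vtx.lev
    omega
  · have hm := (Nat.find_spec (exists_meet u v)).dist_le
    have hf : Far (HG.dist u v) u v := by
      rcases near_or_far u v with h' | h'
      · exact absurd ⟨h'.1, h'.2.1, h'.2.2.1⟩ h
      · exact h'
    have h1 := Nat.find_min' (exists_meet u v) hf.meet
    have h2 := hf.le
    unfold Vtx.lev
    omega

open Classical in
lemma join_comm (u v : Vtx) : join u v = join v u := by
  have hs : SameRay u v ↔ SameRay v u :=
    ⟨fun h => ⟨h.1.symm, h.2.1.symm, h.2.2.symm⟩, fun h => ⟨h.1.symm, h.2.1.symm, h.2.2.symm⟩⟩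
  unfold join
  by_cases h : SameRay u v
  · rw [if_pos h, if_pos (hs.1 h), max_comm]
  · rw [if_neg h, if_neg (fun h' => h (hs.2 h'))]
    congr 1
    apply le_antisymm
    · exact Nat.find_min' _ (Nat.find_spec (exists_meet v u)).symm
    · exact Nat.find_min' _ (Nat.find_spec (exists_meet u v)).symm

open Classical in
/-- The join height is an ultrametric up to an additive constant. -/
lemma join_ultra (u v x : Vtx) : join u x ≤ max (join u v) (join v x) + 2 := by
  have hlev : ∀ u v j, Meet u v j → u.lev ≤ j ∧ v.lev ≤ j := by
    intro u v j h
    have h1 := h.1.1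
    have h2 := h.1.2.1
    unfold Vtx.lev
    omega
  have huv := Nat.find_spec (exists_meet u v)
  have hvx := Nat.find_spec (exists_meet v x)
  have luv := hlev _ _ _ huv
  have lvx := hlev _ _ _ hvx
  unfold join
  by_cases h1 : SameRay u v <;> by_cases h2 : SameRay v x <;> by_cases h3 : SameRay u x
  · simp only [h1, h2, h3, if_true]
    omega
  · exact absurd ⟨h1.1.trans h2.1, h1.2.1.trans h2.2.1, h1.2.2.trans h2.2.2⟩ h3
  · exact absurd ⟨h1.1.symm.trans h3.1, h1.2.1.symm.trans h3.2.1, h1.2.2.symm.trans h3.2.2⟩ h2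
  · simp only [h1, h2, h3, if_true, if_false]
    have := Nat.find_min' (exists_meet u x) (h1.meet.2 hvx)
    omega
  · exact absurd ⟨h3.1.trans h2.1.symm, h3.2.1.trans h2.2.1.symm, h3.2.2.trans h2.2.2.symm⟩ h1
  · simp only [h1, h2, h3, if_true, if_false]
    have := Nat.find_min' (exists_meet u x) (h2.meet_right.1 huv)
    omega
  · simp only [h1, h2, h3, if_true, if_false]
    omega
  · simp only [h1, h2, h3, if_false]
    have := Nat.find_min' (exists_meet u x)
      ((huv.mono (le_max_left _ _)).trans (hvx.mono (le_max_right _ _)))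
    omega

lemma HG_hyperbolic : GromovHyperbolic HG := by
  refine ⟨30, by norm_num, fun w x y z => ?_⟩
  have d1 := dist_join x w
  have d2 := dist_join y w
  have d3 := dist_join z w
  have d4 := dist_join x y
  have d5 := dist_join x z
  have d6 := dist_join y z
  have u1 := join_ultra x z y
  have u2 := join_ultra x w y
  have u3 := join_ultra z x w
  have u4 := join_ultra z y w
  have u5 := join_ultra x z w
  have u6 := join_ultra y z w
  rw [join_comm z y] at *
  rw [join_comm w y] at *
  rw [join_comm z x] at *
  -- the four-point condition over `ℤ`, doubled
  have key : min ((HG.dist x w : ℤ) + HG.dist z w - HG.dist x z)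
      ((HG.dist y w : ℤ) + HG.dist z w - HG.dist y z) - 60
      ≤ (HG.dist x w : ℤ) + HG.dist y w - HG.dist x y := by
    omega
  have key' : min ((HG.dist x w : ℝ) + HG.dist z w - HG.dist x z)
      ((HG.dist y w : ℝ) + HG.dist z w - HG.dist y z) - 60
      ≤ (HG.dist x w : ℝ) + HG.dist y w - HG.dist x y := by
    exact_mod_cast key
  unfold GromovProduct
  rcases min_choice ((HG.dist x w : ℝ) + HG.dist z w - HG.dist x z)
      ((HG.dist y w : ℝ) + HG.dist z w - HG.dist y z) with h | h
  · rw [h] at key'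
    refine (sub_le_sub_right (min_le_left _ _) _).trans ?_
    linarith
  · rw [h] at key'
    refine (sub_le_sub_right (min_le_right _ _) _).trans ?_
    linarith

/-! ### Bounded harmonic functions: reduction to the quotient by the block translations -/

/-- Harmonicity on `HG`, written as a finite sum of increments. -/
def Balanced (h : Vtx → ℝ) : Prop := ∀ v, ∑ u ∈ nbrs v, (h u - h v) = 0

lemma Harmonic.balanced {h : Vtx → ℝ} (hh : Harmonic HG h) : Balanced h := by
  intro v
  have := hh v
  rw [neighborSet_eq, Set.ncard_coe_finset, finsum_mem_coe_finset] at this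
  rw [Finset.sum_sub_distrib, Finset.sum_const, nsmul_eq_mul, ← this, sub_self]

lemma eq_zero_of_mul_le {d C : ℝ} (h : ∀ t : ℕ, |(t : ℝ) * d| ≤ C) : d = 0 := by
  by_contra hd
  have hpos : 0 < |d| := abs_pos.2 hd
  obtain ⟨t, ht⟩ := exists_nat_gt (C / |d|)
  rw [div_lt_iff₀ hpos] at ht
  have := h t
  rw [abs_mul, Nat.abs_cast] at this
  linarith

lemma Balanced.ray {h : Vtx → ℝ} (hh : Balanced h) {M : ℝ} (hM : ∀ v, |h v| ≤ M) (n k w t : ℕ) :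
    h ⟨n, k, w, t⟩ = h ⟨n, k, w, 0⟩ := by
  set d := h ⟨n, k, w, 1⟩ - h ⟨n, k, w, 0⟩ with hd
  have step : ∀ t, h ⟨n, k, w, t + 1⟩ - h ⟨n, k, w, t⟩ = d := by
    intro t
    induction t with
    | zero => rfl
    | succ t ih =>
      have := hh ⟨n, k, w, t + 1⟩
      rw [sum_nbrs_ray] at this
      rw [show t + 1 + 1 = t + 2 from rfl]
      linarith
  have lin : ∀ t : ℕ, h ⟨n, k, w, t⟩ = h ⟨n, k, w, 0⟩ + t * d := by
    intro t
    induction t with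
    | zero => simp
    | succ t ih =>
      have := step t
      push_cast
      linarith
  have hd0 : d = 0 := by
    apply eq_zero_of_mul_le (C := 2 * M)
    intro t
    rw [show (t : ℝ) * d = h ⟨n, k, w, t⟩ - h ⟨n, k, w, 0⟩ by rw [lin t]; ring]
    refine (abs_sub _ _).trans ?_
    linarith [hM ⟨n, k, w, t⟩, hM ⟨n, k, w, 0⟩]
  rw [lin t, hd0]
  ring

/-- The automorphism of `HG` translating the `⊕ (ℤ/2)⁶` coordinate; bitwise `xor` with `c` is used as
the translation, since it commutes with passing to base-64 ancestors and is an involution. -/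
def shift (c : ℕ) (v : Vtx) : Vtx := ⟨v.n, v.k, v.w ^^^ (c / 64 ^ v.n), v.t⟩

lemma xor_div (a b : ℕ) : (a ^^^ b) / 64 = a / 64 ^^^ b / 64 :=
  Nat.xor_div_two_pow (n := 6)

lemma shift_shift (c : ℕ) (v : Vtx) : shift c (shift c v) = v := by
  simp [shift]

lemma shift_arc (c : ℕ) {u v : Vtx} (h : Arc u v) : Arc (shift c u) (shift c v) := by
  cases h with
  | right n k w => exact Arc.right _ _ _
  | par n k w =>
    have := Arc.par n k (w ^^^ (c / 64 ^ n))
    rw [xor_div, Nat.div_div_eq_div_mul, ← pow_succ] at this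
    exact this
  | ray n k w t => exact Arc.ray _ _ _ _

lemma shift_mem (c : ℕ) {u v : Vtx} (h : u ∈ nbrs v) : shift c u ∈ nbrs (shift c v) := by
  rw [mem_nbrs] at h ⊢
  exact h.imp (shift_arc c) (shift_arc c)

lemma Balanced.sub_shift {h : Vtx → ℝ} (hh : Balanced h) (c : ℕ) :
    Balanced fun v => h v - h (shift c v) := by
  intro v
  have e : ∑ u ∈ nbrs (shift c v), (h u - h (shift c v))
      = ∑ u ∈ nbrs v, (h (shift c u) - h (shift c v)) := by
    refine Finset.sum_nbij' (shift c) (shift c) ?_ ?_ ?_ ?_ ?_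
    · intro u hu
      simpa [shift_shift] using shift_mem c hu
    · intro u hu
      exact shift_mem c hu
    · intro u _
      exact shift_shift c u
    · intro u _
      exact shift_shift c u
    · intro u _
      rw [shift_shift]
  have h1 := hh v
  have h2 := hh (shift c v)
  rw [e] at h2
  calc ∑ u ∈ nbrs v, (h u - h (shift c u) - (h v - h (shift c v)))
      = ∑ u ∈ nbrs v, (h u - h v) - ∑ u ∈ nbrs v, (h (shift c u) - h (shift c v)) := by
        rw [← Finset.sum_sub_distrib]
        exact Finset.sum_congr rfl fun _ _ => by ring
    _ = 0 := by rw [h1, h2, sub_zero]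

/-- A bounded harmonic function vanishing from level `N` on has all its bounds contracted by a fixed
factor: from each vertex the walk goes straight up to level `N` with probability at least
`132⁻ᴺ`. -/
lemma Balanced.contract {u : Vtx → ℝ} (hu : Balanced u) {N : ℕ} (h0 : ∀ v, N ≤ v.n → u v = 0)
    {M : ℝ} (hM : ∀ v, |u v| ≤ M) (v : Vtx) : |u v| ≤ (1 - (1 / 132) ^ N) * M := by
  classical
  have hM0 : 0 ≤ M := (abs_nonneg _).trans (hM ⟨0, 0, 0, 0⟩)
  have claim : ∀ i n k w : ℕ, N ≤ n + i → |u ⟨n, k, w, 0⟩| ≤ (1 - (1 / 132) ^ i) * M := by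
    intro i
    induction i with
    | zero =>
      intro n k w hn
      rw [h0 _ hn]
      simp
    | succ i ih =>
      intro n k w hn
      have hp := ih (n + 1) (k / 2) (w / 64) (by omega)
      set v : Vtx := ⟨n, k, w, 0⟩ with hv
      set p : Vtx := ⟨n + 1, k / 2, w / 64, 0⟩ with hpdef
      have hmem : p ∈ nbrs v := (mem_nbrs _ _).2 (Or.inl (Arc.par n k w))
      have hs := hu v
      rw [Finset.sum_sub_distrib, Finset.sum_const, nsmul_eq_mul] at hs
      have hd1 : (1 : ℝ) ≤ (nbrs v).card := by
        exact_mod_cast Finset.card_pos.2 ⟨p, hmem⟩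
      have hd2 : ((nbrs v).card : ℝ) ≤ 132 := by exact_mod_cast card_nbrs_le v
      set d : ℝ := ((nbrs v).card : ℝ) with hd
      have hsum : |∑ x ∈ nbrs v, u x| ≤ d * M - (1 / 132) ^ i * M := by
        have h1 : ∀ x ∈ nbrs v, |u x| ≤ M - if x = p then (1 / 132) ^ i * M else 0 := by
          intro x _
          split_ifs with hx
          · rw [hx]
            linarith
          · linarith [hM x]
        refine (Finset.abs_sum_le_sum_abs _ _).trans ((Finset.sum_le_sum h1).trans ?_)
        rw [Finset.sum_sub_distrib, Finset.sum_const, nsmul_eq_mul, Finset.sum_ite_eq' ,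
          if_pos hmem]
      rw [show ∑ x ∈ nbrs v, u x = d * u v by linarith, abs_mul, abs_of_nonneg (by linarith)]
        at hsum
      have he : 0 ≤ (1 / 132 : ℝ) ^ i * M := by positivity
      rw [pow_succ]
      by_contra hc
      push Not at hc
      have h2 := mul_lt_mul_of_pos_left hc (by linarith : 0 < d)
      nlinarith
  rcases v with ⟨n, k, w, t⟩
  rw [hu.ray hM]
  exact claim N n k w (by omega)

lemma Balanced.eq_zero {u : Vtx → ℝ} (hu : Balanced u) {N : ℕ} (h0 : ∀ v, N ≤ v.n → u v = 0)
    {M : ℝ} (hM : ∀ v, |u v| ≤ M) (v : Vtx) : u v = 0 := by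
  set ρ : ℝ := 1 - (1 / 132) ^ N with hρ
  have hρ0 : 0 ≤ ρ := by
    have : (1 / 132 : ℝ) ^ N ≤ 1 := pow_le_one₀ (by norm_num) (by norm_num)
    linarith
  have hρ1 : ρ < 1 := by
    have : 0 < (1 / 132 : ℝ) ^ N := by positivity
    linarith
  have iter : ∀ i : ℕ, ∀ v, |u v| ≤ ρ ^ i * M := by
    intro i
    induction i with
    | zero => simpa using hM
    | succ i ih =>
      intro v
      refine (hu.contract h0 ih v).trans (le_of_eq ?_)
      rw [pow_succ']
      ring
  have lim : Filter.Tendsto (fun i : ℕ => ρ ^ i * M) Filter.atTop (nhds 0) := by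
    simpa using (tendsto_pow_atTop_nhds_zero_of_lt_one hρ0 hρ1).mul_const M
  have := ge_of_tendsto' lim fun i => iter i v
  exact abs_eq_zero.1 (le_antisymm this (abs_nonneg _))

lemma Balanced.block_invariant {h : Vtx → ℝ} (hh : Balanced h) {M : ℝ} (hM : ∀ v, |h v| ≤ M)
    (n k w t : ℕ) : h ⟨n, k, w, t⟩ = h ⟨n, k, 0, 0⟩ := by
  rw [hh.ray hM]
  set c := w * 64 ^ n with hc
  have h0 : ∀ v : Vtx, c ≤ v.n → h v - h (shift c v) = 0 := by
    intro v hv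
    have : c / 64 ^ v.n = 0 :=
      Nat.div_eq_of_lt (hv.trans_lt (Nat.lt_pow_self (by norm_num)))
    simp [shift, this]
  have hb : ∀ v : Vtx, |h v - h (shift c v)| ≤ 2 * M := by
    intro v
    refine (abs_sub _ _).trans ?_
    linarith [hM v, hM (shift c v)]
  have := (hh.sub_shift c).eq_zero h0 hb ⟨n, k, w, 0⟩
  have e : shift c ⟨n, k, w, 0⟩ = ⟨n, k, 0, 0⟩ := by
    simp [shift, hc]
  rw [e] at this
  linarith

/-! ### Bounded harmonic functions on the quotient -/

/-- The harmonicity equation on the quotient: each vertex has `128` children, `64` over each of the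
two dyadic children. -/
def QuotBalanced (H : ℕ → ℕ → ℝ) : Prop := ∀ n k,
  (H n (k + 1) - H n k) - (if 0 < k then H n k - H n (k - 1) else 0)
    + (H (n + 1) (k / 2) - H n k)
    - (if 0 < n then
        64 * ((H n k - H (n - 1) (2 * k)) + (H n k - H (n - 1) (2 * k + 1))) else 0) = 0

lemma Balanced.quot {h : Vtx → ℝ} (hh : Balanced h) {M : ℝ} (hM : ∀ v, |h v| ≤ M) :
    QuotBalanced fun n k => h ⟨n, k, 0, 0⟩ := by
  intro n k
  have := hh ⟨n, k, 0, 0⟩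
  rw [sum_nbrs_base] at this
  simp only [hh.block_invariant hM n k 0 1, hh.block_invariant hM (n - 1) _ (64 * 0 + _) 0,
    Finset.sum_range_succ, Finset.sum_range_zero, Finset.sum_const, Nat.zero_div] at this
  simp only [Finset.card_range, nsmul_eq_mul, add_zero, zero_add] at this ⊢
  push_cast at this
  split_ifs at this ⊢ <;> linarith

/-- A cutoff function of small energy on the quotient network, equal to `0` off a finite set. -/
noncomputable def cut (N n k : ℕ) : ℝ := max 0 (1 - (k + 1) * 2 ^ n / 2 ^ N)

lemma cut_eq_zero {N n k : ℕ} (h : 2 ^ N ≤ (k + 1) * 2 ^ n) : cut N n k = 0 := by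
  unfold cut
  apply max_eq_left
  have : (2 : ℝ) ^ N ≤ (k + 1) * 2 ^ n := by exact_mod_cast h
  have : 1 ≤ ((k : ℝ) + 1) * 2 ^ n / 2 ^ N := by
    rw [le_div_iff₀ (by positivity)]
    linarith
  linarith

lemma cut_zero_of_level {N n k : ℕ} (h : N ≤ n) : cut N n k = 0 := by
  apply cut_eq_zero
  calc 2 ^ N ≤ 2 ^ n := Nat.pow_le_pow_right (by norm_num) h
    _ ≤ (k + 1) * 2 ^ n := Nat.le_mul_of_pos_left _ (by omega)

lemma cut_zero_of_pos {N n k : ℕ} (h : 2 ^ N ≤ k) : cut N n k = 0 := by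
  apply cut_eq_zero
  calc 2 ^ N ≤ k + 1 := by omega
    _ ≤ (k + 1) * 2 ^ n := Nat.le_mul_of_pos_right _ (by positivity)

lemma cut_ge {N n k : ℕ} (h : n + k + 1 ≤ N) : 1 / 2 ≤ cut N n k := by
  refine le_trans ?_ (le_max_right _ _)
  have h1 : (k + 1) * 2 ^ n * 2 ≤ 2 ^ N := by
    calc (k + 1) * 2 ^ n * 2 ≤ 2 ^ k * 2 ^ n * 2 := by
          gcongr
          exact Nat.lt_two_pow_self
      _ = 2 ^ (n + k + 1) := by rw [pow_add, pow_add]; ring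
      _ ≤ 2 ^ N := Nat.pow_le_pow_right (by norm_num) h
  have h2 : ((k : ℝ) + 1) * 2 ^ n * 2 ≤ 2 ^ N := by exact_mod_cast h1
  have h3 : ((k : ℝ) + 1) * 2 ^ n / 2 ^ N ≤ 1 / 2 := by
    rw [div_le_iff₀ (by positivity)]
    linarith
  linarith

lemma sq_max_sub_le {x y d : ℝ} (h : |x - y| ≤ d) : (max 0 x - max 0 y) ^ 2 ≤ d ^ 2 := by
  have h1 : |max 0 x - max 0 y| ≤ |x - y| := by
    simpa [max_comm] using abs_max_sub_max_le_abs x y 0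
  rw [← sq_abs]
  exact pow_le_pow_left₀ (abs_nonneg _) (h1.trans h) 2

lemma cut_right (N n k : ℕ) : (cut N n (k + 1) - cut N n k) ^ 2 ≤ (2 ^ n / 2 ^ N : ℝ) ^ 2 := by
  apply sq_max_sub_le
  rw [show (1 - ((k + 1 : ℕ) + 1 : ℝ) * 2 ^ n / 2 ^ N) - (1 - ((k : ℝ) + 1) * 2 ^ n / 2 ^ N)
    = -(2 ^ n / 2 ^ N) by push_cast; ring, abs_neg, abs_of_nonneg (by positivity)]

lemma cut_up (N n k : ℕ) :
    (cut N (n + 1) (k / 2) - cut N n k) ^ 2 ≤ (2 ^ n / 2 ^ N : ℝ) ^ 2 := by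
  apply sq_max_sub_le
  rcases Nat.even_or_odd' k with ⟨j, rfl | rfl⟩
  · rw [show 2 * j / 2 = j by omega]
    rw [show (1 - ((j : ℝ) + 1) * 2 ^ (n + 1) / 2 ^ N)
        - (1 - (((2 * j : ℕ) : ℝ) + 1) * 2 ^ n / 2 ^ N) = -(2 ^ n / 2 ^ N) by
      push_cast; ring, abs_neg, abs_of_nonneg (by positivity)]
  · rw [show (2 * j + 1) / 2 = j by omega]
    rw [show (1 - ((j : ℝ) + 1) * 2 ^ (n + 1) / 2 ^ N)
        - (1 - (((2 * j + 1 : ℕ) : ℝ) + 1) * 2 ^ n / 2 ^ N) = 0 by push_cast; ring, abs_zero]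
    positivity

/-- The Caccioppoli inequality along one edge. -/
lemma edge_ineq {a b f g M : ℝ} (ha : |a| ≤ M) (hb : |b| ≤ M) :
    (f ^ 2 + g ^ 2) / 4 * (b - a) ^ 2
      ≤ (b - a) * (g ^ 2 * b - f ^ 2 * a) + 2 * M ^ 2 * (g - f) ^ 2 := by
  have hab : ((a + b) / 2) ^ 2 ≤ M ^ 2 := by
    apply sq_le_sq'
    · linarith [(abs_le.1 ha).1, (abs_le.1 hb).1]
    · linarith [(abs_le.1 ha).2, (abs_le.1 hb).2]
  have e : (b - a) * (g ^ 2 * b - f ^ 2 * a)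
      = (f ^ 2 + g ^ 2) / 2 * (b - a) ^ 2 + (b - a) * (g + f) * ((g - f) * ((a + b) / 2)) := by
    ring
  have h1 : 0 ≤ ((b - a) * (g + f) + 4 * ((g - f) * ((a + b) / 2))) ^ 2 := sq_nonneg _
  have h2 : (g - f) ^ 2 * ((a + b) / 2) ^ 2 ≤ (g - f) ^ 2 * M ^ 2 :=
    mul_le_mul_of_nonneg_left hab (sq_nonneg _)
  have h3 : 0 ≤ (b - a) ^ 2 * (g - f) ^ 2 := by positivity
  rw [e]
  nlinarith

lemma parts_right (e φ : ℕ → ℝ) (K : ℕ) :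
    ∑ k ∈ Finset.range K, φ k * (e k - if 0 < k then e (k - 1) else 0)
      = φ K * (if 0 < K then e (K - 1) else 0)
        - ∑ k ∈ Finset.range K, e k * (φ (k + 1) - φ k) := by
  induction K with
  | zero => simp
  | succ K ih =>
    rw [Finset.sum_range_succ, Finset.sum_range_succ, ih]
    rw [if_pos (Nat.succ_pos K), Nat.add_sub_cancel]
    ring

lemma sum_range_double (F : ℕ → ℝ) (K : ℕ) :
    ∑ k ∈ Finset.range (2 * K), F k
      = ∑ k ∈ Finset.range K, (F (2 * k) + F (2 * k + 1)) := by
  induction K with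
  | zero => simp
  | succ K ih =>
    rw [show 2 * (K + 1) = 2 * K + 1 + 1 by ring, Finset.sum_range_succ, Finset.sum_range_succ, ih,
      Finset.sum_range_succ]
    ring

lemma parts_up (D φ : ℕ → ℕ → ℝ) (N K : ℕ) (hN : ∀ k, φ N k = 0)
    (hK : ∀ n k, K ≤ k → φ n k = 0) :
    ∑ n ∈ Finset.range N, ∑ k ∈ Finset.range (2 * K), (1 / 64 : ℝ) ^ n * (φ n k *
        (D n k - if 0 < n then 64 * (D (n - 1) (2 * k) + D (n - 1) (2 * k + 1)) else 0))
      = - ∑ n ∈ Finset.range N, ∑ k ∈ Finset.range (2 * K),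
          (1 / 64 : ℝ) ^ n * (D n k * (φ (n + 1) (k / 2) - φ n k)) := by
  have trunc : ∀ (n : ℕ) (F : ℕ → ℝ),
      ∑ k ∈ Finset.range (2 * K), φ n k * F k = ∑ k ∈ Finset.range K, φ n k * F k := by
    intro n F
    symm
    apply Finset.sum_subset
    · intro k
      simp only [Finset.mem_range]
      omega
    · intro k _ hk
      rw [hK n k (by simpa using hk), zero_mul]
  -- the contribution of the edges from level `n` to level `n + 1`, seen from level `n + 1`
  set A : ℕ → ℝ := fun n => ∑ k ∈ Finset.range (2 * K),
    (1 / 64 : ℝ) ^ n * (φ (n + 1) (k / 2) * D n k) with hA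
  have hAN : ∀ n, A n = ∑ k ∈ Finset.range (2 * K), (1 / 64 : ℝ) ^ (n + 1) *
      (φ (n + 1) k * (64 * (D n (2 * k) + D n (2 * k + 1)))) := by
    intro n
    simp only [hA]
    rw [← Finset.mul_sum, ← Finset.mul_sum, trunc, sum_range_double, Finset.mul_sum,
      Finset.mul_sum]
    refine Finset.sum_congr rfl fun k _ => ?_
    rw [show 2 * k / 2 = k by omega, show (2 * k + 1) / 2 = k by omega, pow_succ]
    ring
  have e1 : ∀ N, ∑ n ∈ Finset.range N, ∑ k ∈ Finset.range (2 * K), (1 / 64 : ℝ) ^ n * (φ n k *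
        (if 0 < n then 64 * (D (n - 1) (2 * k) + D (n - 1) (2 * k + 1)) else 0))
      = ∑ n ∈ Finset.range (N - 1), A n := by
    intro N
    rcases N with _ | N
    · simp
    · rw [Finset.sum_range_succ']
      simp [hAN]
  have e2 : ∑ n ∈ Finset.range (N - 1), A n = ∑ n ∈ Finset.range N, A n := by
    rcases N with _ | N
    · simp
    · rw [Finset.sum_range_succ]
      have : A N = 0 := by
        simp [hA, hN]
      rw [this]
      simp
  have e3 := e1 N
  rw [e2] at e3
  simp only [mul_sub, Finset.sum_sub_distrib, e3]
  simp only [hA, neg_sub]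
  congr 1
  · refine Finset.sum_congr rfl fun n _ => Finset.sum_congr rfl fun k _ => ?_
    ring
  · refine Finset.sum_congr rfl fun n _ => Finset.sum_congr rfl fun k _ => ?_
    ring

/-- Summation by parts against a finitely supported test function. -/
lemma QuotBalanced.parts {H : ℕ → ℕ → ℝ} (hH : QuotBalanced H) (φ : ℕ → ℕ → ℝ) (N K : ℕ)
    (hN : ∀ k, φ N k = 0) (hK : ∀ n k, K ≤ k → φ n k = 0) :
    ∑ n ∈ Finset.range N, ∑ k ∈ Finset.range (2 * K), (1 / 64 : ℝ) ^ n *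
      ((H n (k + 1) - H n k) * (φ n (k + 1) - φ n k)
        + (H (n + 1) (k / 2) - H n k) * (φ (n + 1) (k / 2) - φ n k)) = 0 := by
  have h1 := parts_up (fun n k => H (n + 1) (k / 2) - H n k) φ N K hN hK
  have h2 : ∀ n, ∑ k ∈ Finset.range (2 * K), (1 / 64 : ℝ) ^ n * (φ n k *
      ((H n (k + 1) - H n k) - if 0 < k then H n k - H n (k - 1) else 0))
      = - ∑ k ∈ Finset.range (2 * K), (1 / 64 : ℝ) ^ n *
        ((H n (k + 1) - H n k) * (φ n (k + 1) - φ n k)) := by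
    intro n
    have := parts_right (fun k => H n (k + 1) - H n k) (φ n) (2 * K)
    rw [hK n (2 * K) (by omega), zero_mul, zero_sub] at this
    rw [← Finset.mul_sum, ← Finset.mul_sum, ← mul_neg, ← this]
    congr 1
    refine Finset.sum_congr rfl fun k _ => ?_
    rcases k with _ | k <;> simp
  have h3 := Finset.sum_congr (rfl : Finset.range N = Finset.range N) fun n _ => h2 n
  rw [Finset.sum_neg_distrib] at h3
  have h4 : ∑ n ∈ Finset.range N, ∑ k ∈ Finset.range (2 * K), (1 / 64 : ℝ) ^ n * (φ n k *
      ((H n (k + 1) - H n k) - if 0 < k then H n k - H n (k - 1) else 0))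
    + ∑ n ∈ Finset.range N, ∑ k ∈ Finset.range (2 * K), (1 / 64 : ℝ) ^ n * (φ n k *
        ((H (n + 1) (k / 2) - H n k) - if 0 < n then 64 * ((H (n - 1 + 1) (2 * k / 2)
          - H (n - 1) (2 * k)) + (H (n - 1 + 1) ((2 * k + 1) / 2) - H (n - 1) (2 * k + 1)))
          else 0)) = 0 := by
    rw [← Finset.sum_add_distrib]
    refine Finset.sum_eq_zero fun n _ => ?_
    rw [← Finset.sum_add_distrib]
    refine Finset.sum_eq_zero fun k _ => ?_
    rw [← mul_add, ← mul_add]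
    have := hH n k
    rw [show 2 * k / 2 = k by omega, show (2 * k + 1) / 2 = k by omega]
    have e : (if 0 < n then 64 * ((H (n - 1 + 1) k - H (n - 1) (2 * k))
        + (H (n - 1 + 1) k - H (n - 1) (2 * k + 1))) else 0)
      = if 0 < n then 64 * ((H n k - H (n - 1) (2 * k)) + (H n k - H (n - 1) (2 * k + 1)))
        else 0 := by
      split_ifs with hn
      · rw [Nat.sub_add_cancel hn]
      · rfl
    rw [e, show ∀ a b c d : ℝ, a - b + (c - d) = a - b + c - d by intros; ring, this]
    ring
  rw [h3, h1] at h4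
  simp only [mul_add, Finset.sum_add_distrib]
  linarith

/-- Caccioppoli inequality: testing harmonicity of `H` against `cut N ^ 2 * H` bounds the energy of `H`
where `cut N ≥ 1 / 2` by that of `cut N`, which is at most `8 * 2 ^ (-N)`. -/
lemma QuotBalanced.energy {H : ℕ → ℕ → ℝ} (hH : QuotBalanced H) {M : ℝ}
    (hM : ∀ n k, |H n k| ≤ M) {N n k : ℕ} (hN : n + k + 1 ≤ N) :
    (1 / 64 : ℝ) ^ n * (1 / 16 * ((H n (k + 1) - H n k) ^ 2 + (H (n + 1) (k / 2) - H n k) ^ 2))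
      ≤ 16 * M ^ 2 * (1 / 2) ^ N := by
  set φ : ℕ → ℕ → ℝ := fun n k => cut N n k ^ 2 * H n k with hφ
  have hparts := hH.parts φ N (2 ^ N) (fun k => by simp [hφ, cut_zero_of_level le_rfl])
    (fun n k h => by simp [hφ, cut_zero_of_pos h])
  -- the energy of the cutoff on the edges to the right of and above a vertex
  set B : ℕ → ℕ → ℝ := fun n k => (cut N n (k + 1) - cut N n k) ^ 2
    + (cut N (n + 1) (k / 2) - cut N n k) ^ 2 with hB
  set G : ℕ → ℕ → ℝ := fun n k =>
    cut N n k ^ 2 / 4 * ((H n (k + 1) - H n k) ^ 2 + (H (n + 1) (k / 2) - H n k) ^ 2) with hG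
  have hG0 : ∀ n k, 0 ≤ G n k := fun n k => by simp only [hG]; positivity
  have hGle : ∀ n k, (1 / 64 : ℝ) ^ n * G n k ≤ (1 / 64 : ℝ) ^ n *
      ((H n (k + 1) - H n k) * (φ n (k + 1) - φ n k)
        + (H (n + 1) (k / 2) - H n k) * (φ (n + 1) (k / 2) - φ n k))
      + 2 * M ^ 2 * ((1 / 64 : ℝ) ^ n * B n k) := by
    intro n k
    have h1 := edge_ineq (f := cut N n k) (g := cut N n (k + 1)) (hM n k) (hM n (k + 1))
    have h2 := edge_ineq (f := cut N n k) (g := cut N (n + 1) (k / 2)) (hM n k)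
      (hM (n + 1) (k / 2))
    have h3 : 0 ≤ cut N n (k + 1) ^ 2 * (H n (k + 1) - H n k) ^ 2 := by positivity
    have h4 : 0 ≤ cut N (n + 1) (k / 2) ^ 2 * (H (n + 1) (k / 2) - H n k) ^ 2 := by positivity
    rw [show ∀ a b c d : ℝ, a * b + c * (a * d) = a * (b + c * d) by intros; ring]
    apply mul_le_mul_of_nonneg_left _ (by positivity)
    simp only [hG, hB, hφ]
    nlinarith
  have hsum : ∑ n ∈ Finset.range N, ∑ k ∈ Finset.range (2 * 2 ^ N), (1 / 64 : ℝ) ^ n * G n k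
      ≤ 2 * M ^ 2 * ∑ n ∈ Finset.range N, ∑ k ∈ Finset.range (2 * 2 ^ N),
        (1 / 64 : ℝ) ^ n * B n k := by
    have := Finset.sum_le_sum fun n (_ : n ∈ Finset.range N) =>
      Finset.sum_le_sum fun k (_ : k ∈ Finset.range (2 * 2 ^ N)) => hGle n k
    simp only [Finset.sum_add_distrib, ← Finset.mul_sum] at this hparts ⊢
    linarith
  have hBsum : ∑ n ∈ Finset.range N, ∑ k ∈ Finset.range (2 * 2 ^ N), (1 / 64 : ℝ) ^ n * B n k
      ≤ 8 * (1 / 2) ^ N := by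
    have h1 : ∀ n ∈ Finset.range N, ∑ k ∈ Finset.range (2 * 2 ^ N), (1 / 64 : ℝ) ^ n * B n k
        ≤ 4 * (1 / 2) ^ N * (1 / 2) ^ n := by
      intro n _
      have h2 : ∀ k ∈ Finset.range (2 * 2 ^ N), (1 / 64 : ℝ) ^ n * B n k
          ≤ (1 / 64 : ℝ) ^ n * (2 * (2 ^ n / 2 ^ N : ℝ) ^ 2) := by
        intro k _
        have := cut_right N n k
        have := cut_up N n k
        gcongr
        simp only [hB]
        linarith
      refine (Finset.sum_le_sum h2).trans ?_
      rw [Finset.sum_const, Finset.card_range, nsmul_eq_mul]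
      have h3 : (1 / 16 : ℝ) ^ n ≤ (1 / 2) ^ n := pow_le_pow_left₀ (by norm_num) (by norm_num) n
      have h4 : ((2 * 2 ^ N : ℕ) : ℝ) * ((1 / 64 : ℝ) ^ n * (2 * (2 ^ n / 2 ^ N : ℝ) ^ 2))
          = 4 * (1 / 2) ^ N * (1 / 16) ^ n := by
        rw [show (1 / 16 : ℝ) = 1 / 64 * 2 * 2 by norm_num, mul_pow, mul_pow, one_div_pow 2 N]
        push_cast
        field_simp
        ring
      rw [h4]
      gcongr
    refine (Finset.sum_le_sum h1).trans ?_
    rw [← Finset.mul_sum]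
    have h5 : ∑ n ∈ Finset.range N, (1 / 2 : ℝ) ^ n ≤ 2 := sum_geometric_two_le N
    have h6 : 0 ≤ 4 * (1 / 2 : ℝ) ^ N := by positivity
    nlinarith
  have hk2 : k < 2 * 2 ^ N := by
    have : k < 2 ^ k := Nat.lt_two_pow_self
    have : 2 ^ k ≤ 2 ^ N := Nat.pow_le_pow_right (by norm_num) (by omega)
    omega
  have hone : (1 / 64 : ℝ) ^ n * G n k
      ≤ ∑ n ∈ Finset.range N, ∑ k ∈ Finset.range (2 * 2 ^ N), (1 / 64 : ℝ) ^ n * G n k := by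
    have hnn : ∀ n k, 0 ≤ (1 / 64 : ℝ) ^ n * G n k := fun n k =>
      mul_nonneg (by positivity) (hG0 n k)
    refine le_trans ?_ (Finset.single_le_sum (f := fun n => ∑ k ∈ Finset.range (2 * 2 ^ N),
      (1 / 64 : ℝ) ^ n * G n k) (fun n _ => Finset.sum_nonneg fun k _ => hnn n k)
      (Finset.mem_range.2 (by omega : n < N)))
    exact Finset.single_le_sum (f := fun k => (1 / 64 : ℝ) ^ n * G n k) (fun k _ => hnn n k)
      (Finset.mem_range.2 hk2)
  have hcut : 1 / 16 * ((H n (k + 1) - H n k) ^ 2 + (H (n + 1) (k / 2) - H n k) ^ 2) ≤ G n k := by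
    have h1 := cut_ge hN
    have h2 : 1 / 16 ≤ cut N n k ^ 2 / 4 := by nlinarith
    exact mul_le_mul_of_nonneg_right h2 (by positivity)
  calc (1 / 64 : ℝ) ^ n * (1 / 16 * ((H n (k + 1) - H n k) ^ 2
        + (H (n + 1) (k / 2) - H n k) ^ 2))
      ≤ (1 / 64 : ℝ) ^ n * G n k := by gcongr
    _ ≤ _ := hone.trans hsum
    _ ≤ 2 * M ^ 2 * (8 * (1 / 2) ^ N) := by gcongr
    _ = 16 * M ^ 2 * (1 / 2) ^ N := by ring

lemma QuotBalanced.const {H : ℕ → ℕ → ℝ} (hH : QuotBalanced H) {M : ℝ}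
    (hM : ∀ n k, |H n k| ≤ M) (n k : ℕ) : H n k = H 0 0 := by
  have hedge : ∀ n k, H n (k + 1) = H n k ∧ H (n + 1) (k / 2) = H n k := by
    intro n k
    have lim : Filter.Tendsto (fun N : ℕ => 16 * M ^ 2 * (1 / 2 : ℝ) ^ N) Filter.atTop
        (nhds 0) := by
      simpa using (tendsto_pow_atTop_nhds_zero_of_lt_one (r := (1 / 2 : ℝ)) (by norm_num)
        (by norm_num)).const_mul (16 * M ^ 2)
    have h := ge_of_tendsto lim (Filter.eventually_atTop.2
      ⟨n + k + 1, fun N hN => hH.energy hM hN⟩)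
    have hc : 0 < (1 / 64 : ℝ) ^ n := by positivity
    have h0 := nonpos_of_mul_nonpos_right h hc
    have h1 := sq_nonneg (H n (k + 1) - H n k)
    have h2 := sq_nonneg (H (n + 1) (k / 2) - H n k)
    constructor
    · exact sub_eq_zero.1 (pow_eq_zero_iff (two_ne_zero) |>.1 (by linarith))
    · exact sub_eq_zero.1 (pow_eq_zero_iff (two_ne_zero) |>.1 (by linarith))
  have hk : H n k = H n 0 := by
    induction k with
    | zero => rfl
    | succ k ih => rw [(hedge n k).1, ih]
  rw [hk]
  induction n with
  | zero => rfl
  | succ n ih => exact ((hedge n 0).2).trans (ih (by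
      clear hk ih
      induction k with
      | zero => rfl
      | succ k ih => rw [(hedge n k).1, ih]))

lemma HG_liouville (h : Vtx → ℝ) (hh : Harmonic HG h) (hb : ∃ M : ℝ, ∀ v, |h v| ≤ M) (u v : Vtx) :
    h u = h v := by
  obtain ⟨M, hM⟩ := hb
  have key : ∀ v : Vtx, h v = h ⟨0, 0, 0, 0⟩ := by
    rintro ⟨n, k, w, t⟩
    rw [hh.balanced.block_invariant hM]
    exact (hh.balanced.quot hM).const (fun n k => hM _) n k
  rw [key u, key v]

/-! ### Transience: the flow -/

/-- The uniform probability density on the first `64 ^ n` blocks. -/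
noncomputable def unif (n w : ℕ) : ℝ := if w < 64 ^ n then (1 / 64) ^ n else 0

/-- `spread (n + 1) x` is the fraction of the mass that by position `x` has been spread from the
first `64 ^ n` blocks to the first `64 ^ (n + 1)` blocks; `spread 0 x = 1`. -/
noncomputable def spread : ℕ → ℕ → ℝ
  | 0, _ => 1
  | n + 1, x => ((min (x / 2 ^ (n + 1)) (8 ^ n) : ℕ) : ℝ) / 8 ^ n

/-- The increment of `spread (m + j + 1)` at position `k * 2 ^ m`. -/
noncomputable def jump (m j k : ℕ) : ℝ :=
  if 2 ^ (j + 1) ∣ k ∧ 0 < k ∧ k ≤ 2 ^ (j + 1) * 8 ^ (m + j) then (1 / 8) ^ (m + j) else 0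

/-- Flow along the edge `⟨0, k, w, 0⟩ → ⟨0, k + 1, w, 0⟩`. -/
noncomputable def flowRight (k w : ℕ) : ℝ :=
  ∑ n ∈ Finset.range (k + 1), (spread n k - spread (n + 1) k) * unif n w

/-- Flow along the edge `⟨m, k, w, 0⟩ → ⟨m + 1, k / 2, w / 64, 0⟩`. -/
noncomputable def flowUp (m k w : ℕ) : ℝ :=
  - ∑ j ∈ Finset.range k, jump m j k * (unif (j + 1) w - unif j w)

lemma spread_succ (n x : ℕ) :
    spread (n + 1) x = ((min (x / 2 ^ (n + 1)) (8 ^ n) : ℕ) : ℝ) / 8 ^ n := rfl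

lemma spread_succ_sub (n x : ℕ) :
    spread (n + 1) (x + 1) - spread (n + 1) x = jump 0 n (x + 1) := by
  unfold jump
  rw [spread_succ, spread_succ, Nat.succ_div, ← sub_div, zero_add]
  have hpos : 0 < 2 ^ (n + 1) := by positivity
  by_cases hd : 2 ^ (n + 1) ∣ x + 1
  · have hq : (x + 1) / 2 ^ (n + 1) = x / 2 ^ (n + 1) + 1 := by rw [Nat.succ_div, if_pos hd]
    have hx : x + 1 = 2 ^ (n + 1) * (x / 2 ^ (n + 1) + 1) := by
      rw [← hq, Nat.mul_div_cancel' hd]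
    rw [if_pos hd]
    set q := x / 2 ^ (n + 1)
    have hiff : x + 1 ≤ 2 ^ (n + 1) * 8 ^ n ↔ q + 1 ≤ 8 ^ n := by
      rw [hx]
      exact Nat.mul_le_mul_left_iff hpos
    by_cases hle : q + 1 ≤ 8 ^ n
    · rw [if_pos ⟨hd, Nat.succ_pos _, hiff.2 hle⟩, min_eq_left hle, min_eq_left (by omega)]
      push_cast
      rw [one_div_pow]
      ring
    · rw [if_neg (fun h => hle (hiff.1 h.2.2)), min_eq_right (by omega), min_eq_right (by omega)]
      simp
  · rw [if_neg hd, if_neg (fun h => hd h.1)]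
    simp

lemma spread_zero_of_lt {n x : ℕ} (h : x < n) : spread n x = 0 := by
  rcases n with _ | n
  · omega
  · rw [spread_succ, Nat.div_eq_of_lt (h.trans Nat.lt_two_pow_self)]
    simp

lemma spread_nonneg (n x : ℕ) : 0 ≤ spread n x := by
  rcases n with _ | n <;> unfold spread <;> positivity

lemma spread_le_one (n x : ℕ) : spread n x ≤ 1 := by
  rcases n with _ | n
  · exact le_rfl
  · unfold spread
    rw [div_le_one (by positivity)]
    exact_mod_cast min_le_right _ _

lemma spread_eq_one {n x : ℕ} (h : 2 ^ (n + 1) * 8 ^ n ≤ x) : spread (n + 1) x = 1 := by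
  rw [spread_succ, min_eq_right ((Nat.le_div_iff_mul_le (by positivity)).2 (by linarith))]
  push_cast
  rw [div_self (by positivity)]

lemma spread_eq_one' {n x : ℕ} (h : 2 ^ (n + 1) * 8 ^ n ≤ x) : spread n x = 1 := by
  rcases n with _ | n
  · rfl
  · refine spread_eq_one (le_trans ?_ h)
    exact Nat.mul_le_mul (Nat.pow_le_pow_right (by norm_num) (by omega))
      (Nat.pow_le_pow_right (by norm_num) (by omega))

lemma jump_zero_of_le {m j k : ℕ} (h : k ≤ j) : jump m j k = 0 := by
  unfold jump
  rw [if_neg]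
  rintro ⟨hd, hk, -⟩
  have h1 := Nat.le_of_dvd hk hd
  have h2 : j + 1 < 2 ^ (j + 1) := Nat.lt_two_pow_self
  omega

lemma jump_even (m j k : ℕ) : jump m (j + 1) (2 * k) = jump (m + 1) j k := by
  unfold jump
  rw [show m + (j + 1) = m + 1 + j by omega, pow_succ' 2 (j + 1), mul_assoc]
  simp only [Nat.mul_dvd_mul_iff_left (by norm_num : 0 < 2),
    Nat.mul_le_mul_left_iff (by norm_num : 0 < 2), Nat.mul_pos_iff_of_pos_left (by norm_num : 0 < 2)]

lemma jump_odd (m j k : ℕ) : jump m j (2 * k + 1) = 0 := by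
  unfold jump
  rw [if_neg]
  rintro ⟨hd, -⟩
  have : 2 ∣ 2 * k + 1 := (dvd_pow_self 2 (by omega)).trans hd
  omega

lemma jump_sq_le (m j k : ℕ) : jump m j k ^ 2 ≤ ((1 / 8) ^ (m + j)) ^ 2 := by
  unfold jump
  split_ifs
  · exact le_rfl
  · rw [zero_pow two_ne_zero]
    positivity

lemma unif_zero (w : ℕ) : unif 0 w = if w = 0 then 1 else 0 := by
  unfold unif
  simp

lemma sum_unif (n w : ℕ) : ∑ i ∈ Finset.range 64, unif (n + 1) (64 * w + i) = unif n w := by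
  have h : ∀ i ∈ Finset.range 64, unif (n + 1) (64 * w + i) = 1 / 64 * unif n w := by
    intro i hi
    rw [Finset.mem_range] at hi
    unfold unif
    have hiff : 64 * w + i < 64 ^ (n + 1) ↔ w < 64 ^ n := by
      rw [pow_succ]
      omega
    simp only [hiff]
    split_ifs
    · rw [pow_succ]
      ring
    · simp
  rw [Finset.sum_congr rfl h, Finset.sum_const, Finset.card_range, nsmul_eq_mul]
  push_cast
  ring

lemma sum_unif_zero (w : ℕ) : ∑ i ∈ Finset.range 64, unif 0 (64 * w + i) = unif 0 w := by
  simp only [unif_zero]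
  by_cases hw : w = 0
  · subst hw
    simp
  · rw [if_neg hw]
    refine Finset.sum_eq_zero fun i _ => if_neg (by omega)

lemma flowRight_eq {k R : ℕ} (w : ℕ) (h : k + 1 ≤ R) :
    flowRight k w = ∑ n ∈ Finset.range R, (spread n k - spread (n + 1) k) * unif n w := by
  unfold flowRight
  apply Finset.sum_subset
  · intro n
    simp only [Finset.mem_range]
    omega
  · intro n _ hn
    rw [Finset.mem_range] at hn
    rw [spread_zero_of_lt (by omega), spread_zero_of_lt (by omega)]
    simp

lemma flowUp_eq {k R : ℕ} (m w : ℕ) (h : k ≤ R) :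
    flowUp m k w = - ∑ j ∈ Finset.range R, jump m j k * (unif (j + 1) w - unif j w) := by
  unfold flowUp
  congr 1
  apply Finset.sum_subset
  · intro n
    simp only [Finset.mem_range]
    omega
  · intro n _ hn
    rw [Finset.mem_range] at hn
    rw [jump_zero_of_le (by omega), zero_mul]

/-- At level `0` the mass leaving upwards is what `flowRight` loses. -/
lemma flow_level_zero (k w : ℕ) :
    flowRight (k + 1) w - flowRight k w + flowUp 0 (k + 1) w = 0 := by
  rw [flowRight_eq w (le_refl (k + 1 + 1)), flowRight_eq w (by omega : k + 1 ≤ k + 1 + 1),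
    flowUp_eq 0 w (by omega : k + 1 ≤ k + 1 + 1), ← sub_eq_add_neg, ← Finset.sum_sub_distrib,
    ← Finset.sum_sub_distrib]
  set δ : ℕ → ℝ := fun n => spread n (k + 1) - spread n k with hδ
  have e : ∀ n ∈ Finset.range (k + 1 + 1),
      (spread n (k + 1) - spread (n + 1) (k + 1)) * unif n w
        - (spread n k - spread (n + 1) k) * unif n w
        - jump 0 n (k + 1) * (unif (n + 1) w - unif n w)
      = δ n * unif n w - δ (n + 1) * unif (n + 1) w := by
    intro n _
    rw [← spread_succ_sub]
    simp only [hδ]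
    ring
  rw [Finset.sum_congr rfl e, Finset.sum_range_sub' (fun n => δ n * unif n w)]
  have h0 : δ 0 = 0 := by simp [hδ, spread]
  have h1 : δ (k + 1 + 1) = 0 := by
    simp only [hδ]
    rw [spread_zero_of_lt (by omega), spread_zero_of_lt (by omega), sub_zero]
  rw [h0, h1]
  ring

lemma flow_origin (w : ℕ) : flowRight 0 w + flowUp 0 0 w = if w = 0 then 1 else 0 := by
  unfold flowRight flowUp
  simp [spread, unif_zero]

/-- At positive levels the flow coming from the children leaves to the parent. -/
lemma flow_level_succ (m k w : ℕ) :
    ∑ r ∈ Finset.range 2, ∑ i ∈ Finset.range 64, flowUp m (2 * k + r) (64 * w + i)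
      = flowUp (m + 1) k w := by
  rw [Finset.sum_range_succ, Finset.sum_range_one]
  have h1 : ∑ i ∈ Finset.range 64, flowUp m (2 * k + 1) (64 * w + i) = 0 := by
    refine Finset.sum_eq_zero fun i _ => ?_
    unfold flowUp
    simp [jump_odd]
  rw [h1, add_zero, add_zero]
  have h2 : ∀ i ∈ Finset.range 64, flowUp m (2 * k) (64 * w + i)
      = - ∑ j ∈ Finset.range (2 * k + 1),
        jump m j (2 * k) * (unif (j + 1) (64 * w + i) - unif j (64 * w + i)) :=
    fun i _ => flowUp_eq m _ (by omega)
  rw [Finset.sum_congr rfl h2, Finset.sum_neg_distrib, Finset.sum_comm,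
    flowUp_eq (m + 1) w (by omega : k ≤ 2 * k), Finset.sum_range_succ']
  congr 1
  have h3 : ∑ i ∈ Finset.range 64, jump m 0 (2 * k) *
      (unif (0 + 1) (64 * w + i) - unif 0 (64 * w + i)) = 0 := by
    rw [← Finset.mul_sum, Finset.sum_sub_distrib, sum_unif, sum_unif_zero, sub_self, mul_zero]
  rw [h3, add_zero]
  refine Finset.sum_congr rfl fun j _ => ?_
  rw [← Finset.mul_sum, Finset.sum_sub_distrib, sum_unif, sum_unif, jump_even]

/-! ### Transience: the energy -/

/-- Square-summability of a superposition of layers `A p`, each supported on a finite set `S p` and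
bounded, by Cauchy–Schwarz with weights `ω`. -/
lemma summable_layers {ι κ : Type} (A : κ → ι → ℝ) (T : ι → Finset κ) (S : κ → Finset ι)
    (b ω : κ → ℝ) (hS : ∀ p i, i ∉ S p → A p i = 0) (hb : ∀ p i, A p i ^ 2 ≤ b p)
    (hω : ∀ p, 0 < ω p) (sω : Summable ω) (sb : Summable fun p => (S p).card * b p / ω p) :
    Summable fun i => (∑ p ∈ T i, A p i) ^ 2 := by
  classical
  have hb0 : ∀ p, 0 ≤ (S p).card * b p / ω p := by
    intro p
    rcases (S p).eq_empty_or_nonempty with h | ⟨i, -⟩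
    · simp [h]
    · have := (sq_nonneg _).trans (hb p i)
      have := hω p
      positivity
  have hW : 0 ≤ ∑' p, ω p := tsum_nonneg fun p => (hω p).le
  refine summable_of_sum_le (c := (∑' p, ω p) * ∑' p, (S p).card * b p / ω p)
    (fun i => sq_nonneg _) fun u => ?_
  -- Cauchy–Schwarz at a single index
  have cs : ∀ i, (∑ p ∈ T i, A p i) ^ 2 ≤ (∑' p, ω p) * ∑ p ∈ T i, A p i ^ 2 / ω p := by
    intro i
    rcases (T i).eq_empty_or_nonempty with h | h
    · simp [h]
    · have h1 := Finset.sq_sum_div_le_sum_sq_div (T i) (fun p => A p i) (g := ω) fun p _ => hω p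
      rw [div_le_iff₀ (Finset.sum_pos (fun p _ => hω p) h)] at h1
      have h2 : ∑ p ∈ T i, ω p ≤ ∑' p, ω p := sω.sum_le_tsum _ fun p _ => (hω p).le
      have h3 : 0 ≤ ∑ p ∈ T i, A p i ^ 2 / ω p :=
        Finset.sum_nonneg fun p _ => div_nonneg (sq_nonneg _) (hω p).le
      nlinarith
  calc ∑ i ∈ u, (∑ p ∈ T i, A p i) ^ 2
      ≤ ∑ i ∈ u, (∑' p, ω p) * ∑ p ∈ T i, A p i ^ 2 / ω p := Finset.sum_le_sum fun i _ => cs i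
    _ = (∑' p, ω p) * ∑ i ∈ u, ∑ p ∈ T i, A p i ^ 2 / ω p := by rw [Finset.mul_sum]
    _ ≤ (∑' p, ω p) * ∑ i ∈ u, ∑ p ∈ u.biUnion T, A p i ^ 2 / ω p := by
      gcongr with i hi
      · exact fun p _ _ => div_nonneg (sq_nonneg _) (hω p).le
      · exact Finset.subset_biUnion_of_mem T hi
    _ = (∑' p, ω p) * ∑ p ∈ u.biUnion T, ∑ i ∈ u, A p i ^ 2 / ω p := by rw [Finset.sum_comm]
    _ ≤ (∑' p, ω p) * ∑ p ∈ u.biUnion T, (S p).card * b p / ω p := by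
      gcongr with p _
      rw [← Finset.sum_div]
      have := hω p
      gcongr
      calc ∑ i ∈ u, A p i ^ 2 = ∑ i ∈ u with i ∈ S p, A p i ^ 2 := by
            rw [Finset.sum_filter]
            refine Finset.sum_congr rfl fun i _ => ?_
            split_ifs with h
            · rfl
            · simp [hS p i h]
        _ ≤ ∑ i ∈ S p, A p i ^ 2 :=
            Finset.sum_le_sum_of_subset_of_nonneg
              (fun i hi => (Finset.mem_filter.1 hi).2) fun _ _ _ => sq_nonneg _
        _ ≤ ∑ i ∈ S p, b p := Finset.sum_le_sum fun i _ => hb p i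
        _ = (S p).card * b p := by rw [Finset.sum_const, nsmul_eq_mul]
    _ ≤ _ := by
      gcongr
      exact sb.sum_le_tsum _ fun p _ => hb0 p

lemma unif_sq_le (n w : ℕ) : unif n w ^ 2 ≤ ((1 / 64) ^ n) ^ 2 := by
  unfold unif
  split_ifs
  · exact le_rfl
  · rw [zero_pow two_ne_zero]
    positivity

lemma summable_flowRight : Summable fun p : ℕ × ℕ => flowRight p.1 p.2 ^ 2 := by
  refine summable_layers
    (fun (n : ℕ) (p : ℕ × ℕ) => (spread n p.1 - spread (n + 1) p.1) * unif n p.2)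
    (fun p => Finset.range (p.1 + 1))
    (fun n => Finset.range (2 ^ (n + 1) * 8 ^ n) ×ˢ Finset.range (64 ^ n))
    (fun n => ((1 / 64) ^ n) ^ 2) (fun n => (1 / 2) ^ n) ?_ ?_ (fun n => by positivity)
    (summable_geometric_of_lt_one (by norm_num) (by norm_num)) ?_
  · rintro n ⟨k, w⟩ h
    simp only [Finset.mem_product, Finset.mem_range, not_and_or, not_lt] at h ⊢
    rcases h with h | h
    · rw [spread_eq_one h, spread_eq_one' h]
      simp
    · simp [unif, h]
  · rintro n ⟨k, w⟩
    simp only [mul_pow]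
    have h1 : (spread n k - spread (n + 1) k) ^ 2 ≤ 1 := by
      rw [sq_le_one_iff_abs_le_one, abs_le]
      constructor <;>
        linarith [spread_nonneg n k, spread_nonneg (n + 1) k, spread_le_one n k,
          spread_le_one (n + 1) k]
    have h2 := unif_sq_le n w
    have h3 : 0 ≤ unif n w ^ 2 := sq_nonneg _
    nlinarith
  · have : (fun n : ℕ => (((Finset.range (2 ^ (n + 1) * 8 ^ n) ×ˢ
        Finset.range (64 ^ n)).card : ℕ) : ℝ) * ((1 / 64) ^ n) ^ 2 / (1 / 2) ^ n)
        = fun n => 2 * (1 / 2 : ℝ) ^ n := by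
      funext n
      rw [Finset.card_product, Finset.card_range, Finset.card_range]
      push_cast
      rw [show (64 : ℝ) = 2 ^ 6 by norm_num, show (8 : ℝ) = 2 ^ 3 by norm_num]
      simp only [one_div, inv_pow, ← pow_mul]
      field_simp
      ring
    rw [this]
    exact (summable_geometric_of_lt_one (by norm_num) (by norm_num)).mul_left 2

lemma summable_flowUp : Summable fun p : ℕ × ℕ × ℕ => flowUp p.1 p.2.1 p.2.2 ^ 2 := by
  have hgeo : ∀ r : ℝ, 0 ≤ r → r < 1 → Summable fun n : ℕ => r ^ n :=
    fun r h0 h1 => summable_geometric_of_lt_one h0 h1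
  have key := summable_layers
    (fun (q : ℕ × ℕ) (p : ℕ × ℕ × ℕ) => if p.1 = q.1 then
      jump q.1 q.2 p.2.1 * (unif (q.2 + 1) p.2.2 - unif q.2 p.2.2) else 0)
    (fun p => {p.1} ×ˢ Finset.range p.2.1)
    (fun q => {q.1} ×ˢ (Finset.Ioc 0 (2 ^ (q.2 + 1) * 8 ^ (q.1 + q.2)) ×ˢ
      Finset.range (64 ^ (q.2 + 1))))
    (fun q => ((1 / 8) ^ (q.1 + q.2)) ^ 2 * ((1 / 64) ^ q.2) ^ 2)
    (fun q => (1 / 2) ^ q.1 * (1 / 2) ^ q.2) ?_ ?_ (fun n => by positivity) ?_ ?_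
  · refine key.congr fun p => ?_
    rw [Finset.sum_product, Finset.sum_singleton]
    simp only [if_true, flowUp, neg_sq]
  · rintro ⟨m, j⟩ ⟨m', k, w⟩ h
    simp only [Finset.mem_product, Finset.mem_range, Finset.mem_singleton, Finset.mem_Ioc] at h ⊢
    split_ifs with hm
    · have : ¬ (0 < k ∧ k ≤ 2 ^ (j + 1) * 8 ^ (m + j)) ∨ ¬ w < 64 ^ (j + 1) := by
        by_contra hc
        push Not at hc
        exact h ⟨hm, hc.1, hc.2⟩
      rcases this with h1 | h1
      · unfold jump
        rw [if_neg (fun hh => h1 hh.2), zero_mul]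
      · have h2 : ¬ w < 64 ^ j := fun h' =>
          h1 (h'.trans_le (Nat.pow_le_pow_right (by norm_num) (by omega)))
        simp [unif, h1, h2]
    · rfl
  · rintro ⟨m, j⟩ ⟨m', k, w⟩
    simp only
    split_ifs
    · rw [mul_pow]
      refine mul_le_mul (jump_sq_le m j k) ?_ (sq_nonneg _) (by positivity)
      have hp : 0 ≤ (1 / 64 : ℝ) ^ j := by positivity
      have b1 : 0 ≤ unif j w ∧ unif j w ≤ (1 / 64) ^ j := by
        unfold unif
        split_ifs
        · exact ⟨hp, le_rfl⟩
        · exact ⟨le_rfl, hp⟩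
      have b2 : 0 ≤ unif (j + 1) w ∧ unif (j + 1) w ≤ (1 / 64) ^ j := by
        unfold unif
        have : (1 / 64 : ℝ) ^ (j + 1) ≤ (1 / 64) ^ j :=
          pow_le_pow_of_le_one (by norm_num) (by norm_num) (by omega)
        split_ifs
        · exact ⟨by positivity, this⟩
        · exact ⟨le_rfl, hp⟩
      apply sq_le_sq' <;> linarith [b1.1, b1.2, b2.1, b2.2]
    · rw [zero_pow two_ne_zero]
      positivity
  · exact (hgeo (1 / 2) (by norm_num) (by norm_num)).mul_of_nonneg
      (hgeo (1 / 2) (by norm_num) (by norm_num)) (fun _ => by positivity) (fun _ => by positivity)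
  · have : (fun q : ℕ × ℕ => ((({q.1} ×ˢ (Finset.Ioc 0 (2 ^ (q.2 + 1) * 8 ^ (q.1 + q.2)) ×ˢ
        Finset.range (64 ^ (q.2 + 1))) : Finset (ℕ × ℕ × ℕ)).card : ℕ) : ℝ) *
          (((1 / 8) ^ (q.1 + q.2)) ^ 2 * ((1 / 64) ^ q.2) ^ 2) / ((1 / 2) ^ q.1 * (1 / 2) ^ q.2))
        = fun q => 128 * ((1 / 4 : ℝ) ^ q.1 * (1 / 128 : ℝ) ^ q.2) := by
      funext q
      rw [Finset.card_product, Finset.card_product, Finset.card_singleton, Nat.card_Ioc, Nat.sub_zero,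
        Finset.card_range]
      push_cast
      rw [show (64 : ℝ) = 2 ^ 6 by norm_num, show (8 : ℝ) = 2 ^ 3 by norm_num,
        show (128 : ℝ) = 2 ^ 7 by norm_num, show (4 : ℝ) = 2 ^ 2 by norm_num]
      simp only [one_div, inv_pow, ← pow_mul]
      field_simp
      ring
    rw [this]
    exact ((hgeo (1 / 4) (by norm_num) (by norm_num)).mul_of_nonneg
      (hgeo (1 / 128) (by norm_num) (by norm_num)) (fun _ => by positivity)
      (fun _ => by positivity)).mul_left 128

/-! ### Transience: assembling the flow on the graph -/

open Classical in
/-- The part of the flow along the level-`0` edges, as a function of oriented edges. -/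
noncomputable def arcRight (u v : Vtx) : ℝ :=
  if u.n = 0 ∧ u.t = 0 ∧ v = ⟨0, u.k + 1, u.w, 0⟩ then flowRight u.k u.w else 0

open Classical in
/-- The part of the flow along the parent edges, as a function of oriented edges. -/
noncomputable def arcUp (u v : Vtx) : ℝ :=
  if u.t = 0 ∧ v = ⟨u.n + 1, u.k / 2, u.w / 64, 0⟩ then flowUp u.n u.k u.w else 0

/-- The unit flow from `⟨0, 0, 0, 0⟩` to infinity. -/
noncomputable def flow (u v : Vtx) : ℝ := arcRight u v + arcUp u v - arcRight v u - arcUp v u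

lemma arcRight_ne {u v : Vtx} (h : arcRight u v ≠ 0) : Arc u v := by
  unfold arcRight at h
  split_ifs at h with hc
  · rcases u with ⟨n, k, w, t⟩
    obtain ⟨rfl, rfl, rfl⟩ := hc
    exact Arc.right _ _ _
  · exact absurd rfl h

lemma arcUp_ne {u v : Vtx} (h : arcUp u v ≠ 0) : Arc u v := by
  unfold arcUp at h
  split_ifs at h with hc
  · rcases u with ⟨n, k, w, t⟩
    obtain ⟨rfl, rfl⟩ := hc
    exact Arc.par _ _ _
  · exact absurd rfl h

lemma flow_isFlow : IsFlow HG flow := by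
  refine ⟨fun u v => by unfold flow; ring, fun u v h => ?_⟩
  by_contra hadj
  apply h
  have h1 : ¬ Arc u v := fun ha => hadj (Or.inl ha)
  have h2 : ¬ Arc v u := fun ha => hadj (Or.inr ha)
  unfold flow
  rw [not_not.1 (mt arcRight_ne h1), not_not.1 (mt arcUp_ne h1), not_not.1 (mt arcRight_ne h2),
    not_not.1 (mt arcUp_ne h2)]
  ring

lemma divg_flow (v : Vtx) : divg flow v = ∑ u ∈ nbrs v, flow v u := by
  unfold divg
  refine tsum_eq_sum fun u hu => ?_
  by_contra h
  exact hu ((mem_nbrs u v).2 (flow_isFlow.2 v u h))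

lemma flow_ray (n k w t : ℕ) (u : Vtx) : flow ⟨n, k, w, t + 1⟩ u = 0 := by
  simp [flow, arcRight, arcUp]

lemma flow_right (n k w : ℕ) :
    flow ⟨n, k, w, 0⟩ ⟨n, k + 1, w, 0⟩ = if n = 0 then flowRight k w else 0 := by
  simp [flow, arcRight, arcUp]
  omega

lemma flow_par (n k w : ℕ) :
    flow ⟨n, k, w, 0⟩ ⟨n + 1, k / 2, w / 64, 0⟩ = flowUp n k w := by
  simp [flow, arcRight, arcUp]
  omega

lemma flow_ray_zero (n k w : ℕ) : flow ⟨n, k, w, 0⟩ ⟨n, k, w, 1⟩ = 0 := by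
  rw [flow_isFlow.1, flow_ray, neg_zero]

lemma divg_base (n k w : ℕ) : divg flow ⟨n, k, w, 0⟩
    = (if n = 0 then flowRight k w else 0) + flowUp n k w
      - (if 0 < k then (if n = 0 then flowRight (k - 1) w else 0) else 0)
      - (if 0 < n then ∑ r ∈ Finset.range 2, ∑ i ∈ Finset.range 64,
          flowUp (n - 1) (2 * k + r) (64 * w + i) else 0) := by
  rw [divg_flow, sum_nbrs_base, flow_ray_zero, flow_right, flow_par]
  have h1 : (if 0 < k then flow ⟨n, k, w, 0⟩ ⟨n, k - 1, w, 0⟩ else 0)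
      = - (if 0 < k then (if n = 0 then flowRight (k - 1) w else 0) else 0) := by
    split_ifs with hk hn
    all_goals try simp
    all_goals
      obtain ⟨j, rfl⟩ : ∃ j, k = j + 1 := ⟨k - 1, by omega⟩
      rw [flow_isFlow.1, Nat.add_sub_cancel, flow_right]
      simp [hn]
  have h2 : (if 0 < n then ∑ r ∈ Finset.range 2, ∑ i ∈ Finset.range 64,
        flow ⟨n, k, w, 0⟩ ⟨n - 1, 2 * k + r, 64 * w + i, 0⟩ else 0)
      = - (if 0 < n then ∑ r ∈ Finset.range 2, ∑ i ∈ Finset.range 64,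
          flowUp (n - 1) (2 * k + r) (64 * w + i) else 0) := by
    split_ifs with hn
    · obtain ⟨m, rfl⟩ : ∃ m, n = m + 1 := ⟨n - 1, by omega⟩
      simp only [← Finset.sum_neg_distrib]
      refine Finset.sum_congr rfl fun r hr => Finset.sum_congr rfl fun i hi => ?_
      rw [Finset.mem_range] at hr hi
      have := flow_par m (2 * k + r) (64 * w + i)
      rw [show (2 * k + r) / 2 = k by omega, show (64 * w + i) / 64 = w by omega] at this
      rw [flow_isFlow.1, Nat.add_sub_cancel, this]
    · simp
  rw [h1, h2]
  ring

open Classical in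
lemma divg_flow_eq (v : Vtx) : divg flow v = if v = ⟨0, 0, 0, 0⟩ then 1 else 0 := by
  rcases v with ⟨n, k, w, t⟩
  rcases t with _ | t
  · rw [divg_base]
    rcases n with _ | m
    · rcases k with _ | k
      · have := flow_origin w
        simpa using this
      · have := flow_level_zero k w
        simp
        linarith
    · have := flow_level_succ m k w
      simp [this]
  · rw [divg_flow]
    simp [flow_ray]

lemma summable_arcRight : Summable fun p : Vtx × Vtx => arcRight p.1 p.2 ^ 2 := by
  have hinj : Function.Injective fun q : ℕ × ℕ =>
      ((⟨0, q.1, q.2, 0⟩, ⟨0, q.1 + 1, q.2, 0⟩) : Vtx × Vtx) := by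
    rintro ⟨a, b⟩ ⟨c, d⟩ h
    simp at h
    simp [h]
  refine (hinj.summable_iff ?_).1 ?_
  · rintro ⟨u, v⟩ h
    have : arcRight u v = 0 := by
      unfold arcRight
      rw [if_neg]
      rintro ⟨h1, h2, h3⟩
      apply h
      refine ⟨(u.k, u.w), ?_⟩
      rcases u with ⟨n, k, w, t⟩
      simp only at h1 h2 h3
      simp [h1, h2, h3]
    simp [this]
  · refine summable_flowRight.congr fun q => ?_
    simp [arcRight]

lemma summable_arcUp : Summable fun p : Vtx × Vtx => arcUp p.1 p.2 ^ 2 := by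
  have hinj : Function.Injective fun q : ℕ × ℕ × ℕ =>
      ((⟨q.1, q.2.1, q.2.2, 0⟩, ⟨q.1 + 1, q.2.1 / 2, q.2.2 / 64, 0⟩) : Vtx × Vtx) := by
    rintro ⟨a, b, c⟩ ⟨d, e, f⟩ h
    simp at h
    simp [h]
  refine (hinj.summable_iff ?_).1 ?_
  · rintro ⟨u, v⟩ h
    have : arcUp u v = 0 := by
      unfold arcUp
      rw [if_neg]
      rintro ⟨h2, h3⟩
      apply h
      refine ⟨(u.n, u.k, u.w), ?_⟩
      rcases u with ⟨n, k, w, t⟩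
      simp only at h2 h3
      simp [h2, h3]
    simp [this]
  · refine summable_flowUp.congr fun q => ?_
    simp [arcUp]

lemma HG_transient : Transient HG := by
  refine ⟨⟨0, 0, 0, 0⟩, flow, flow_isFlow, ?_, ?_, ?_⟩
  · rw [divg_flow_eq, if_pos rfl]
  · intro v hv
    rw [divg_flow_eq, if_neg hv]
  · have s1 := summable_arcRight
    have s2 := summable_arcUp
    have s3 : Summable fun p : Vtx × Vtx => arcRight p.2 p.1 ^ 2 :=
      s1.comp_injective (i := Prod.swap) Prod.swap_injective
    have s4 : Summable fun p : Vtx × Vtx => arcUp p.2 p.1 ^ 2 :=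
      s2.comp_injective (i := Prod.swap) Prod.swap_injective
    refine Summable.of_nonneg_of_le (fun p => sq_nonneg _) (fun p => ?_)
      (((s1.add s2).add (s3.add s4)).mul_left 4)
    have four : ∀ a b c d : ℝ,
        (a + b - c - d) ^ 2 ≤ 4 * ((a ^ 2 + b ^ 2) + (c ^ 2 + d ^ 2)) := by
      intro a b c d
      nlinarith [sq_nonneg (a - b), sq_nonneg (a + c), sq_nonneg (a + d), sq_nonneg (b + c),
        sq_nonneg (b + d), sq_nonneg (c - d)]
    exact four _ _ _ _

theorem counterexample_benjamini_schramm :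
    ∃ (V : Type) (G : SimpleGraph V),
      G.Connected ∧ BoundedDegree G ∧
      -- (1) Gromov-hyperbolic
      GromovHyperbolic G ∧
      -- (2) transient
      Transient G ∧
      -- (3) every vertex lies on a bi-infinite geodesic
      (∀ v : V, ∃ x : ℤ → V, IsBiInfiniteGeodesic G x ∧ ∃ i : ℤ, x i = v) ∧
      -- (4) every bounded harmonic function is constant
      (∀ h : V → ℝ, Harmonic G h → (∃ M : ℝ, ∀ v, |h v| ≤ M) → ∀ u v, h u = h v) := by
  exact ⟨Vtx, HG, HG_connected, HG_boundedDegree, HG_hyperbolic, HG_transient, exists_geodesic,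
    HG_liouville⟩

end Paper
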